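/- Let n ≥ 2 and 2 ≤ p ≤ n. Let u : ℝⁿ → ℝ be a smooth entire p-plurisubharmonic function which has quadratic growth, solves M_p(D²u(x)) = 1 for all x ∈ ℝⁿ, and is moreover (p−1)-plurisubharmonic. Then u is a quadratic polynomial, i.e. there exist a symmetric matrix A, a vector b ∈ ℝⁿ and c ∈ ℝ with u(x) = ½ xᵀAx + b·x + c for all x. -/

import Mathlib

open scoped BigOperators

noncomputable section

/-- The positive orthant `Γₙ = (0,∞)ⁿ` in `ℝⁿ`. -/
def PosOrthant (n : ℕ) : Set (Fin n → ℝ) := {lam | ∀ i, 0 < lam i}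

/-- A convex invariant cone: an open cone `Γ ⊆ ℝⁿ` with vertex at the origin, `Γ ≠ ℝⁿ`,
which is convex, satisfies `Γ + Γₙ ⊆ Γ`, and is invariant under permutations of coordinates. -/
def IsConvexInvariantCone {n : ℕ} (Γ : Set (Fin n → ℝ)) : Prop :=
  IsOpen Γ ∧ Γ ≠ Set.univ ∧ Convex ℝ Γ ∧
    (∀ lam ∈ Γ, ∀ t : ℝ, 0 < t → t • lam ∈ Γ) ∧
    (∀ lam ∈ Γ, ∀ tau ∈ PosOrthant n, lam + tau ∈ Γ) ∧
    (∀ lam ∈ Γ, ∀ σ : Equiv.Perm (Fin n), lam ∘ σ ∈ Γ)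

/-- The partial derivative `∂f/∂λᵢ(λ)`. -/
def fpd {n : ℕ} (f : (Fin n → ℝ) → ℝ) (i : Fin n) (lam : Fin n → ℝ) : ℝ :=
  fderiv ℝ f lam (Pi.single i 1)

/-- A concave elliptic Hessian operator on a convex invariant cone `Γ`:
a `C²`, permutation-invariant, concave function `f` on `Γ` which is elliptic
(`∂f/∂λᵢ > 0`), positive, and positively homogeneous of degree one. -/
def IsConcaveEllipticHessianOp {n : ℕ} (Γ : Set (Fin n → ℝ)) (f : (Fin n → ℝ) → ℝ) : Prop :=
  ContDiffOn ℝ 2 f Γ ∧ ConcaveOn ℝ Γ f ∧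
    (∀ lam ∈ Γ, ∀ σ : Equiv.Perm (Fin n), f (lam ∘ σ) = f lam) ∧
    (∀ lam ∈ Γ, ∀ i, 0 < fpd f i lam) ∧
    (∀ lam ∈ Γ, 0 < f lam) ∧
    (∀ lam ∈ Γ, ∀ t : ℝ, 0 < t → f (t • lam) = t * f lam)

/-- Condition N: whenever `λ ∈ Γ` satisfies `f(λ) = 1` and `Σᵢ ∂f/∂λᵢ(λ) ≤ C` for some `C > 0`,
then `∂f/∂λᵢ(λ) ≥ 1/(N₁ C^{N₂})` for every `i`. -/
def ConditionN {n : ℕ} (Γ : Set (Fin n → ℝ)) (f : (Fin n → ℝ) → ℝ) (N₁ N₂ : ℝ) : Prop :=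
  ∀ lam ∈ Γ, f lam = 1 → ∀ C : ℝ, 0 < C → (∑ i, fpd f i lam) ≤ C →
    ∀ i, 1 / (N₁ * C ^ N₂) ≤ fpd f i lam

/-- The Hessian matrix `D²u(x)`. -/
def hessianMatrix {n : ℕ} (u : EuclideanSpace ℝ (Fin n) → ℝ) (x : EuclideanSpace ℝ (Fin n)) :
    Matrix (Fin n) (Fin n) ℝ :=
  fun i j => iteratedFDeriv ℝ 2 u x ![EuclideanSpace.single i 1, EuclideanSpace.single j 1]

/-- The vector of eigenvalues `λ(D²u(x))` of the Hessian of `u` at `x`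
(junk value `0` if the Hessian matrix fails to be symmetric). -/
def hessEigen {n : ℕ} (u : EuclideanSpace ℝ (Fin n) → ℝ) (x : EuclideanSpace ℝ (Fin n)) :
    Fin n → ℝ :=
  if h : (hessianMatrix u x).IsHermitian then h.eigenvalues else 0

/-- Condition D for a solution `u` of `F(D²u) = 1` on a set `Ω`: at every point, if an
eigenvalue `λᵢ` of `D²u` exceeds `D₁` then `∂f/∂λᵢ(λ) ⬝ λᵢ ≤ D₂`. -/
def ConditionD {n : ℕ} (f : (Fin n → ℝ) → ℝ) (u : EuclideanSpace ℝ (Fin n) → ℝ)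
    (Ω : Set (EuclideanSpace ℝ (Fin n))) (D₁ D₂ : ℝ) : Prop :=
  ∀ x ∈ Ω, ∀ i, D₁ < hessEigen u x i →
    fpd f i (hessEigen u x) * hessEigen u x i ≤ D₂

/-- The `k`-th elementary symmetric polynomial `σ_k` on `ℝⁿ`. -/
def esymmF (n k : ℕ) (lam : Fin n → ℝ) : ℝ :=
  ∑ s ∈ (Finset.univ : Finset (Fin n)).powersetCard k, ∏ i ∈ s, lam i

/-- The Gårding cone `Γ_k = {λ : σ_j(λ) > 0, j = 1,…,k}`. -/
def GammaK (n k : ℕ) : Set (Fin n → ℝ) :=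
  {lam | ∀ j : ℕ, 1 ≤ j → j ≤ k → 0 < esymmF n j lam}

/-- The cone `Γ̂_p` of vectors all of whose sums of `p` distinct coordinates are positive. -/
def GammaHat (n p : ℕ) : Set (Fin n → ℝ) :=
  {lam | ∀ s : Finset (Fin n), s.card = p → 0 < ∑ i ∈ s, lam i}

/-- The `p`-Monge–Ampère operator `M_p(λ) = ∏_{i₁<⋯<i_p} (λ_{i₁} + ⋯ + λ_{i_p})`. -/
def pMA (n p : ℕ) (lam : Fin n → ℝ) : ℝ :=
  ∏ s ∈ (Finset.univ : Finset (Fin n)).powersetCard p, ∑ i ∈ s, lam i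

/-- Quadratic growth: `u(x) ≥ C⁻¹|x|² − C` for some `C > 0`. -/
def QuadraticGrowth {n : ℕ} (u : EuclideanSpace ℝ (Fin n) → ℝ) : Prop :=
  ∃ C : ℝ, 0 < C ∧ ∀ x, C⁻¹ * ‖x‖ ^ 2 - C ≤ u x

/-- `u` is a quadratic polynomial: `u(x) = ½ xᵀAx + b·x + c` with `A` symmetric. -/
def IsQuadraticPolynomial {n : ℕ} (u : EuclideanSpace ℝ (Fin n) → ℝ) : Prop :=
  ∃ (A : Matrix (Fin n) (Fin n) ℝ) (b : Fin n → ℝ) (c : ℝ), A.IsSymm ∧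
    ∀ x, u x = (1 / 2) * (∑ i, ∑ j, A i j * x i * x j) + (∑ i, b i * x i) + c


/-! ### Basic calculus -/

/-- directional derivative -/
def D1 {n : ℕ} (u : EuclideanSpace ℝ (Fin n) → ℝ) (a : EuclideanSpace ℝ (Fin n)) :
    EuclideanSpace ℝ (Fin n) → ℝ := fun x => fderiv ℝ u x a

/-- second derivative as a bilinear form -/
def hs {n : ℕ} (u : EuclideanSpace ℝ (Fin n) → ℝ) (x : EuclideanSpace ℝ (Fin n)) :
    EuclideanSpace ℝ (Fin n) →L[ℝ] EuclideanSpace ℝ (Fin n) →L[ℝ] ℝ :=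
  fderiv ℝ (fderiv ℝ u) x

section basics
variable {n : ℕ} {u : EuclideanSpace ℝ (Fin n) → ℝ}

lemma smooth_fderiv (hu : ContDiff ℝ (⊤ : ℕ∞) u) : ContDiff ℝ (⊤ : ℕ∞) (fderiv ℝ u) :=
  hu.fderiv_right (by simp)

lemma smooth_hs (hu : ContDiff ℝ (⊤ : ℕ∞) u) : ContDiff ℝ (⊤ : ℕ∞) (hs u) :=
  (smooth_fderiv hu).fderiv_right (by simp)

lemma smooth_D1 (hu : ContDiff ℝ (⊤ : ℕ∞) u) (a : EuclideanSpace ℝ (Fin n)) :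
    ContDiff ℝ (⊤ : ℕ∞) (D1 u a) :=
  (smooth_fderiv hu).clm_apply contDiff_const

lemma smooth_hs2 (hu : ContDiff ℝ (⊤ : ℕ∞) u) (a b : EuclideanSpace ℝ (Fin n)) :
    ContDiff ℝ (⊤ : ℕ∞) (fun x => hs u x a b) :=
  ((smooth_hs hu).clm_apply contDiff_const).clm_apply contDiff_const

lemma hs_eq_D1 (hu : ContDiff ℝ (⊤ : ℕ∞) u) (x a b : EuclideanSpace ℝ (Fin n)) :
    hs u x a b = D1 (D1 u b) a x := by
  have h : DifferentiableAt ℝ (fderiv ℝ u) x := (smooth_fderiv hu).differentiable (by simp) x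
  unfold hs D1
  rw [fderiv_clm_apply h (by fun_prop)]
  simp

lemma hs_symm (hu : ContDiff ℝ (⊤ : ℕ∞) u) (x a b : EuclideanSpace ℝ (Fin n)) :
    hs u x a b = hs u x b a := by
  have h : IsSymmSndFDerivAt ℝ u x := hu.contDiffAt.isSymmSndFDerivAt (by
    simp only [minSmoothness_of_isRCLikeNormedField]; 
    exact WithTop.coe_le_coe.mpr (le_top : (2 : ℕ∞) ≤ ⊤))
  exact h a b

lemma D1_comm (hu : ContDiff ℝ (⊤ : ℕ∞) u) (a b : EuclideanSpace ℝ (Fin n)) :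
    D1 (D1 u a) b = D1 (D1 u b) a := by
  funext x
  rw [← hs_eq_D1 hu, ← hs_eq_D1 hu, hs_symm hu]

lemma hs_fun_eq (hu : ContDiff ℝ (⊤ : ℕ∞) u) (a b : EuclideanSpace ℝ (Fin n)) :
    (fun x => hs u x a b) = D1 (D1 u b) a := by
  funext x; exact hs_eq_D1 hu x a b

lemma hs_hs_comm (hu : ContDiff ℝ (⊤ : ℕ∞) u) (x a b : EuclideanSpace ℝ (Fin n)) :
    hs (fun y => hs u y b b) x a a = hs (fun y => hs u y a a) x b b := by
  rw [hs_eq_D1 (smooth_hs2 hu b b), hs_eq_D1 (smooth_hs2 hu a a), hs_fun_eq hu, hs_fun_eq hu]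
  rw [D1_comm (smooth_D1 hu b) b a, D1_comm (smooth_D1 (smooth_D1 hu b) a) b a,
    D1_comm hu b a, D1_comm (smooth_D1 hu a) b a]

lemma hs_D1_perm (hu : ContDiff ℝ (⊤ : ℕ∞) u) (x a b c : EuclideanSpace ℝ (Fin n)) :
    D1 (fun y => hs u y a b) c x = D1 (fun y => hs u y c b) a x := by
  rw [hs_fun_eq hu, hs_fun_eq hu, D1_comm (smooth_D1 hu b)]

lemma line_deriv (hu : ContDiff ℝ (⊤ : ℕ∞) u) (x e : EuclideanSpace ℝ (Fin n)) (t : ℝ) :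
    HasDerivAt (fun t : ℝ => u (x + t • e)) (D1 u e (x + t • e)) t := by
  have h1 : HasFDerivAt u (fderiv ℝ u (x + t • e)) (x + t • e) :=
    (hu.differentiable (by simp) _).hasFDerivAt
  have h2 : HasDerivAt (fun t : ℝ => x + t • e) e t := by
    simpa using ((hasDerivAt_id t).smul_const e).const_add x
  exact h1.comp_hasDerivAt t h2

lemma line_deriv2 (hu : ContDiff ℝ (⊤ : ℕ∞) u) (x e : EuclideanSpace ℝ (Fin n)) (t : ℝ) :
    HasDerivAt (fun t : ℝ => D1 u e (x + t • e)) (hs u (x + t • e) e e) t := by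
  rw [hs_eq_D1 hu]
  exact line_deriv (smooth_D1 hu e) x e t

lemma second_test {f f' : ℝ → ℝ} {c : ℝ} (h1 : ∀ᶠ t in nhds 0, HasDerivAt f (f' t) t)
    (h2 : HasDerivAt f' c 0) (hmin : IsLocalMin f 0) : f' 0 = 0 ∧ 0 ≤ c := by
  have h0 : HasDerivAt f (f' 0) 0 := h1.self_of_nhds
  have hz : f' 0 = 0 := hmin.hasDerivAt_eq_zero h0
  refine ⟨hz, ?_⟩
  by_contra hc
  push Not at hc
  have hd : deriv f =ᶠ[nhds 0] f' := h1.mono fun t ht => ht.deriv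
  have hdd : deriv (deriv f) 0 = c := by
    rw [hd.deriv_eq]; exact h2.deriv
  have hmax : IsLocalMax f 0 := by
    apply isLocalMax_of_deriv_deriv_neg
    · rw [hdd]; exact hc
    · rw [h0.deriv, hz]
    · exact h0.continuousAt
  have hconst : f =ᶠ[nhds 0] fun _ => f 0 := by
    filter_upwards [hmin, hmax] with t a b using le_antisymm b a
  have : deriv (deriv f) 0 = 0 := by
    rw [hconst.deriv.deriv_eq]; simp
  linarith

lemma hs_nonneg_of_localMin (hu : ContDiff ℝ (⊤ : ℕ∞) u) {x : EuclideanSpace ℝ (Fin n)}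
    (hx : IsLocalMin u x) (e : EuclideanSpace ℝ (Fin n)) : D1 u e x = 0 ∧ 0 ≤ hs u x e e := by
  have h2 := line_deriv2 hu x e 0
  have hc : Filter.Tendsto (fun t : ℝ => x + t • e) (nhds 0) (nhds x) := by
    have : Continuous (fun t : ℝ => x + t • e) := by fun_prop
    simpa using this.tendsto 0
  have := second_test (f := fun t : ℝ => u (x + t • e)) (f' := fun t : ℝ => D1 u e (x + t • e))
    (Filter.Eventually.of_forall fun t => line_deriv hu x e t) h2 (by
      have := hc.eventually hx
      simpa [IsLocalMin, IsMinFilter] using this)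
  simpa using this

end basics

/-! ### Growth lemma -/
section growth
variable {n : ℕ}

open scoped RealInnerProductSpace

lemma hs_sub {u v : EuclideanSpace ℝ (Fin n) → ℝ} (hu : ContDiff ℝ (⊤ : ℕ∞) u)
    (hv : ContDiff ℝ (⊤ : ℕ∞) v) (x a b : EuclideanSpace ℝ (Fin n)) :
    hs (fun y => u y - v y) x a b = hs u x a b - hs v x a b := by
  have h1 : fderiv ℝ (fun y => u y - v y) = fun y => fderiv ℝ u y - fderiv ℝ v y := by
    funext y
    exact fderiv_fun_sub (hu.differentiable (by simp) y) (hv.differentiable (by simp) y)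
  unfold hs
  rw [h1, fderiv_fun_sub ((smooth_fderiv hu).differentiable (by simp) x)
    ((smooth_fderiv hv).differentiable (by simp) x)]
  simp

lemma hs_const_mul {u : EuclideanSpace ℝ (Fin n) → ℝ} (hu : ContDiff ℝ (⊤ : ℕ∞) u) (c : ℝ)
    (x a b : EuclideanSpace ℝ (Fin n)) :
    hs (fun y => c * u y) x a b = c * hs u x a b := by
  have h1 : fderiv ℝ (fun y => c * u y) = fun y => c • fderiv ℝ u y := by
    funext y
    exact fderiv_const_mul (hu.differentiable (by simp) y) c
  unfold hs
  rw [h1, fderiv_fun_const_smul ((smooth_fderiv hu).differentiable (by simp) x)]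
  simp

lemma hs_inner (z x a b : EuclideanSpace ℝ (Fin n)) :
    hs (fun y => ⟪z, y⟫) x a b = 0 := by
  have h1 : fderiv ℝ (fun y : EuclideanSpace ℝ (Fin n) => ⟪z, y⟫) = fun _ => innerSL ℝ z := by
    funext y
    exact (innerSL ℝ z).fderiv
  unfold hs
  rw [h1]
  simp

/-- barrier -/
def Psi (n q : ℕ) (x : EuclideanSpace ℝ (Fin n)) : ℝ := ((‖x‖ ^ 2 + 1 / 2) ^ q)⁻¹

lemma Psi_smooth (q : ℕ) : ContDiff ℝ (⊤ : ℕ∞) (Psi n q) := by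
  unfold Psi
  apply ContDiff.inv
  · exact ((contDiff_norm_sq ℝ).add contDiff_const).pow q
  · intro x; positivity

lemma Psi_pos (q : ℕ) (x : EuclideanSpace ℝ (Fin n)) : 0 < Psi n q x := by
  unfold Psi; positivity

lemma Psi_le (q : ℕ) (x : EuclideanSpace ℝ (Fin n)) : Psi n q x ≤ 2 ^ q := by
  unfold Psi
  rw [← inv_pow]
  apply pow_le_pow_left₀ (by positivity)
  rw [inv_le_comm₀ (by positivity) (by norm_num)]
  have : 0 ≤ ‖x‖ ^ 2 := by positivity
  linarith

lemma Psi_D1 (q : ℕ) (e : EuclideanSpace ℝ (Fin n)) :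
    D1 (Psi n q) e = fun x => -(2 * q * ⟪x, e⟫ * Psi n (q + 1) x) := by
  funext x
  have h1 := line_deriv (Psi_smooth (n := n) q) x e 0
  simp only [zero_smul, add_zero] at h1
  refine h1.unique ?_
  have h2 : HasDerivAt (fun t : ℝ => ‖x + t • e‖ ^ 2 + 1 / 2) (2 * ⟪x, e⟫) 0 := by
    have h3 : HasDerivAt (fun t : ℝ => x + t • e) e 0 := by
      simpa using ((hasDerivAt_id (0 : ℝ)).smul_const e).const_add x
    simpa using (h3.norm_sq).add_const (1 / 2)
  have h4 := (h2.pow q).inv (by simp only [Pi.pow_apply]; positivity)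
  unfold Psi
  refine h4.congr_deriv ?_
  have : (0 : ℝ) < ‖x‖ ^ 2 + 1 / 2 := by positivity
  rcases q with _ | q
  · simp
  · simp only [zero_smul, add_zero, Nat.add_sub_cancel, Pi.pow_apply]
    field_simp
    ring

lemma Psi_hs (q : ℕ) (x e : EuclideanSpace ℝ (Fin n)) :
    hs (Psi n q) x e e = -(2 * q * ‖e‖ ^ 2 * Psi n (q + 1) x) +
      4 * q * (q + 1) * ⟪x, e⟫ ^ 2 * Psi n (q + 2) x := by
  rw [hs_eq_D1 (Psi_smooth q)]
  have h1 := line_deriv (smooth_D1 (Psi_smooth (n := n) q) e) x e 0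
  simp only [zero_smul, add_zero] at h1
  refine h1.unique ?_
  rw [Psi_D1]
  have h2 := line_deriv (Psi_smooth (n := n) (q + 1)) x e 0
  rw [Psi_D1] at h2
  have h3 : HasDerivAt (fun t : ℝ => ⟪x + t • e, e⟫) (‖e‖ ^ 2) 0 := by
    have h3 : HasDerivAt (fun t : ℝ => x + t • e) e 0 := by
      simpa using ((hasDerivAt_id (0 : ℝ)).smul_const e).const_add x
    simpa using (h3.inner ℝ (hasDerivAt_const (0 : ℝ) e))
  have h4 := ((h3.const_mul (2 * (q : ℝ))).mul h2).neg
  refine h4.congr_deriv ?_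
  simp only [zero_smul, add_zero]
  push_cast
  ring

lemma trace_hs (u : EuclideanSpace ℝ (Fin n) → ℝ) (x : EuclideanSpace ℝ (Fin n))
    (b b' : OrthonormalBasis (Fin n) ℝ (EuclideanSpace ℝ (Fin n))) :
    ∑ i, hs u x (b i) (b i) = ∑ i, hs u x (b' i) (b' i) := by
  set T : EuclideanSpace ℝ (Fin n) →ₗ[ℝ] EuclideanSpace ℝ (Fin n) :=
    ((InnerProductSpace.toDual ℝ (EuclideanSpace ℝ (Fin n))).symm.toContinuousLinearEquiv.toContinuousLinearMap.comp (hs u x)).toLinearMap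
    with hT
  have key : ∀ v, ⟪v, T v⟫ = hs u x v v := by
    intro v
    rw [real_inner_comm]
    simp [hT]
  simp_rw [← key]
  rw [← LinearMap.trace_eq_sum_inner, ← LinearMap.trace_eq_sum_inner]

lemma det_bound (T : EuclideanSpace ℝ (Fin n) →ₗ[ℝ] EuclideanSpace ℝ (Fin n))
    (hT : T.IsSymmetric) (hpos : ∀ v, 0 ≤ ⟪v, T v⟫)
    (b : OrthonormalBasis (Fin n) ℝ (EuclideanSpace ℝ (Fin n))) {K : ℝ}
    (hK : ∑ i, ⟪b i, T (b i)⟫ ≤ K) : |LinearMap.det T| ≤ K ^ n := by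
  have hn : Module.finrank ℝ (EuclideanSpace ℝ (Fin n)) = n := by simp
  rw [hT.det_eq_prod_eigenvalues hn]
  have ev : ∀ i, hT.eigenvalues hn i = ⟪hT.eigenvectorBasis hn i, T (hT.eigenvectorBasis hn i)⟫ := by
    intro i
    rw [hT.apply_eigenvectorBasis, real_inner_smul_right]
    simp
  have h0 : ∀ i, 0 ≤ hT.eigenvalues hn i := fun i => by rw [ev]; exact hpos _
  have hsum : ∑ i, hT.eigenvalues hn i ≤ K := by
    simp_rw [ev]
    rw [← LinearMap.trace_eq_sum_inner T (hT.eigenvectorBasis hn),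
      LinearMap.trace_eq_sum_inner T b]
    exact hK
  have hle : ∀ i, hT.eigenvalues hn i ≤ K := fun i =>
    (Finset.single_le_sum (fun j _ => h0 j) (Finset.mem_univ i)).trans hsum
  simp only [RCLike.ofReal_real_eq_id, id]
  rw [abs_of_nonneg (Finset.prod_nonneg fun i _ => h0 i)]
  calc ∏ i, hT.eigenvalues hn i ≤ ∏ _i : Fin n, K :=
        Finset.prod_le_prod (fun i _ => h0 i) (fun i _ => hle i)
    _ = K ^ n := by simp

end growth

/-- pointwise supersolution of a uniformly elliptic operator -/
def SuperSol {n : ℕ} (lam Lam : ℝ) (w : EuclideanSpace ℝ (Fin n) → ℝ) : Prop :=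
  ∀ x, ∃ (b : OrthonormalBasis (Fin n) ℝ (EuclideanSpace ℝ (Fin n))) (f : Fin n → ℝ),
    (∀ i, lam ≤ f i ∧ f i ≤ Lam) ∧ ∑ i, f i * hs w x (b i) (b i) ≤ 0

section growth2
open scoped RealInnerProductSpace
open MeasureTheory

lemma barrier_core {n : ℕ} {lam Lam : ℝ} (hlam : 0 < lam) (hL : lam ≤ Lam)
    (q : ℕ) (hq : n * Lam ≤ q * lam)
    (x : EuclideanSpace ℝ (Fin n))
    (b : OrthonormalBasis (Fin n) ℝ (EuclideanSpace ℝ (Fin n))) (f : Fin n → ℝ)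
    (hf : ∀ i, lam ≤ f i ∧ f i ≤ Lam) :
    2 * q * Psi n (q + 2) x * (2 * (q + 1) * lam * ‖x‖ ^ 2 - n * Lam * (‖x‖ ^ 2 + 1 / 2))
      ≤ ∑ i, f i * hs (Psi n q) x (b i) (b i) ∧
    -(2 * q * 2 ^ (q + 1) * (n * Lam)) ≤ ∑ i, f i * hs (Psi n q) x (b i) (b i) := by
  have hs0 : (0 : ℝ) < ‖x‖ ^ 2 + 1 / 2 := by positivity
  have hP : Psi n (q + 1) x = Psi n (q + 2) x * (‖x‖ ^ 2 + 1 / 2) := by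
    unfold Psi
    rw [pow_succ _ (q + 1)]
    field_simp
  have hP1 : Psi n (q + 1) x ≤ 2 ^ (q + 1) := by
    exact Psi_le _ _
  have hPp := Psi_pos (q + 2) x
  have hPp1 := Psi_pos (q + 1) x
  have hsumf : ∑ i, f i ≤ n * Lam := by
    calc ∑ i, f i ≤ ∑ _i : Fin n, Lam := Finset.sum_le_sum fun i _ => (hf i).2
      _ = n * Lam := by simp
  have hpars : ∑ i, ⟪x, b i⟫ ^ 2 = ‖x‖ ^ 2 := by
    have := b.sum_sq_norm_inner_left x
    simpa using this
  have hsumx : lam * ‖x‖ ^ 2 ≤ ∑ i, f i * ⟪x, b i⟫ ^ 2 := by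
    rw [← hpars, Finset.mul_sum]
    exact Finset.sum_le_sum fun i _ => mul_le_mul_of_nonneg_right (hf i).1 (sq_nonneg _)
  have heq : ∑ i, f i * hs (Psi n q) x (b i) (b i) =
      -(2 * q * Psi n (q + 1) x) * (∑ i, f i) +
        4 * q * (q + 1) * Psi n (q + 2) x * ∑ i, f i * ⟪x, b i⟫ ^ 2 := by
    rw [Finset.mul_sum, Finset.mul_sum, ← Finset.sum_add_distrib]
    refine Finset.sum_congr rfl fun i _ => ?_
    rw [Psi_hs]
    simp only [b.norm_eq_one]
    ring
  have hq0 : (0 : ℝ) ≤ q := Nat.cast_nonneg q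
  have hx0 : 0 ≤ lam * ‖x‖ ^ 2 := by positivity
  have hnL : (0 : ℝ) ≤ n * Lam := by
    have : 0 < Lam := hlam.trans_le hL
    positivity
  rw [heq]
  constructor
  · have h1 : (2 * q * Psi n (q + 1) x) * (∑ i, f i) ≤ (2 * q * Psi n (q + 1) x) * (n * Lam) :=
      mul_le_mul_of_nonneg_left hsumf (by positivity)
    have h2 : 4 * q * (q + 1) * Psi n (q + 2) x * (lam * ‖x‖ ^ 2) ≤
        4 * q * (q + 1) * Psi n (q + 2) x * ∑ i, f i * ⟪x, b i⟫ ^ 2 :=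
      mul_le_mul_of_nonneg_left hsumx (by positivity)
    rw [hP] at h1 ⊢
    linarith
  · have h1 : (2 * q * Psi n (q + 1) x) * (∑ i, f i) ≤ (2 * q * Psi n (q + 1) x) * (n * Lam) :=
      mul_le_mul_of_nonneg_left hsumf (by positivity)
    have h3 : (2 * q * Psi n (q + 1) x) * (n * Lam) ≤ (2 * q * 2 ^ (q + 1)) * (n * Lam) := by
      gcongr
    have h2 : 0 ≤ 4 * q * (q + 1) * Psi n (q + 2) x * ∑ i, f i * ⟪x, b i⟫ ^ 2 :=
      mul_nonneg (by positivity) (hx0.trans hsumx)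
    linarith

lemma contact {n : ℕ} {lam Lam : ℝ} (hlam : 0 < lam) (hL : lam ≤ Lam) (q : ℕ) (hq1 : 1 ≤ q)
    (hq : n * Lam ≤ q * lam) {A : ℝ} (hA0 : 0 < A)
    (hA : 5 ≤ A * (((3 / 2 : ℝ) ^ q)⁻¹ - ((9 / 2 : ℝ) ^ q)⁻¹))
    {w : EuclideanSpace ℝ (Fin n) → ℝ} (hw : ContDiff ℝ (⊤ : ℕ∞) w) (hw0 : ∀ x, 0 ≤ w x)
    (hsup : SuperSol lam Lam w) {y : EuclideanSpace ℝ (Fin n)} (hy : ‖y‖ ≤ 1) (hwy : w y ≤ 1)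
    {z : EuclideanSpace ℝ (Fin n)} (hz : ‖z‖ < 1) :
    ∃ x, ‖x‖ < 1 ∧ w x ≤ A * 2 ^ q + 3 ∧
      (∀ e, D1 (fun y => w y - A * Psi n q y) e x = ⟪z, e⟫) ∧
      (∀ e, 0 ≤ hs (fun y => w y - A * Psi n q y) x e e) ∧
      ∃ b : OrthonormalBasis (Fin n) ℝ (EuclideanSpace ℝ (Fin n)),
        ∑ i, hs (fun y => w y - A * Psi n q y) x (b i) (b i) ≤
          A * (2 * q * 2 ^ (q + 1) * (n * Lam)) / lam := by
  set W : EuclideanSpace ℝ (Fin n) → ℝ := fun y => w y - A * Psi n q y with hWdef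
  have hAP : ContDiff ℝ (⊤ : ℕ∞) (fun y => A * Psi n q y) := contDiff_const.mul (Psi_smooth q)
  have hW : ContDiff ℝ (⊤ : ℕ∞) W := hw.sub hAP
  have hin : ContDiff ℝ (⊤ : ℕ∞) (fun y : EuclideanSpace ℝ (Fin n) => ⟪z, y⟫) :=
    (innerSL ℝ z).contDiff
  set g : EuclideanSpace ℝ (Fin n) → ℝ := fun y => W y - ⟪z, y⟫ with hgdef
  have hg : ContDiff ℝ (⊤ : ℕ∞) g := hW.sub hin
  obtain ⟨x, hx, hxmin⟩ := (isCompact_closedBall (0 : EuclideanSpace ℝ (Fin n)) 2).exists_isMinOn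
    ⟨0, by simp⟩ hg.continuous.continuousOn
  have hx2 : ‖x‖ ≤ 2 := by simpa using hx
  have hgxy : g x ≤ g y := hxmin (by simp; linarith)
  have hzy : -1 ≤ ⟪z, y⟫ := by
    have := abs_real_inner_le_norm z y
    have h2 : ‖z‖ * ‖y‖ ≤ 1 := by nlinarith [norm_nonneg z, norm_nonneg y]
    linarith [neg_abs_le (⟪z, y⟫)]
  have hPy : ((3 / 2 : ℝ) ^ q)⁻¹ ≤ Psi n q y := by
    unfold Psi
    apply inv_anti₀ (by positivity)
    apply pow_le_pow_left₀ (by positivity)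
    nlinarith [norm_nonneg y]
  have hgy : g y ≤ 2 - A * ((3 / 2 : ℝ) ^ q)⁻¹ := by
    simp only [hgdef, hWdef]
    have := mul_le_mul_of_nonneg_left hPy hA0.le
    linarith
  have hzx : ⟪z, x⟫ ≤ ‖x‖ := by
    have := real_inner_le_norm z x
    nlinarith [norm_nonneg z, norm_nonneg x]
  have hxlt : ‖x‖ < 2 := by
    rcases hx2.lt_or_eq with h | h
    · exact h
    · exfalso
      have hPx : Psi n q x = ((9 / 2 : ℝ) ^ q)⁻¹ := by
        unfold Psi; rw [h]; norm_num
      have : g x ≥ - A * ((9 / 2 : ℝ) ^ q)⁻¹ - 2 := by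
        simp only [hgdef, hWdef, hPx]
        have := hw0 x
        linarith
      linarith
  have hloc : IsLocalMin g x := by
    have : Metric.closedBall (0 : EuclideanSpace ℝ (Fin n)) 2 ∈ nhds x := by
      apply Filter.mem_of_superset (Metric.isOpen_ball.mem_nhds (x := x) (s := Metric.ball 0 2) _)
        Metric.ball_subset_closedBall
      simpa using hxlt
    exact hxmin.isLocalMin this
  have hD : ∀ e, D1 W e x = ⟪z, e⟫ := by
    intro e
    have h1 := (hs_nonneg_of_localMin hg hloc e).1
    have h2 : D1 g e x = D1 W e x - ⟪z, e⟫ := by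
      unfold D1
      rw [hgdef, fderiv_fun_sub (hW.differentiable (by simp) x) (hin.differentiable (by simp) x)]
      have : fderiv ℝ (fun y : EuclideanSpace ℝ (Fin n) => ⟪z, y⟫) x = innerSL ℝ z :=
        (innerSL ℝ z).fderiv
      rw [this]; simp
    linarith
  have hH : ∀ e, 0 ≤ hs W x e e := by
    intro e
    have h1 := (hs_nonneg_of_localMin hg hloc e).2
    rw [hgdef, hs_sub hW hin, hs_inner] at h1
    linarith
  obtain ⟨b, f, hf, hsum⟩ := hsup x
  have hWw : ∑ i, f i * hs W x (b i) (b i) =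
      ∑ i, f i * hs w x (b i) (b i) - A * ∑ i, f i * hs (Psi n q) x (b i) (b i) := by
    rw [Finset.mul_sum, ← Finset.sum_sub_distrib]
    refine Finset.sum_congr rfl fun i _ => ?_
    rw [hWdef, hs_sub hw hAP, hs_const_mul (Psi_smooth q)]
    ring
  have hWlow : lam * ∑ i, hs W x (b i) (b i) ≤ ∑ i, f i * hs W x (b i) (b i) := by
    rw [Finset.mul_sum]
    exact Finset.sum_le_sum fun i _ => mul_le_mul_of_nonneg_right (hf i).1 (hH _)
  have hW0 : 0 ≤ ∑ i, hs W x (b i) (b i) := Finset.sum_nonneg fun i _ => hH _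
  obtain ⟨hc1, hc2⟩ := barrier_core hlam hL q hq x b f hf
  have hsmall : ‖x‖ < 1 := by
    have h1 : A * ∑ i, f i * hs (Psi n q) x (b i) (b i) ≤ 0 := by
      have := mul_nonneg hlam.le hW0
      linarith
    have h2 : ∑ i, f i * hs (Psi n q) x (b i) (b i) ≤ 0 := by
      by_contra hh
      push Not at hh
      have := mul_pos hA0 hh
      linarith
    have h3 : (2 * (q + 1) * lam * ‖x‖ ^ 2 - n * Lam * (‖x‖ ^ 2 + 1 / 2)) ≤ 0 := by
      by_contra hh
      push Not at hh
      have hq' : (0 : ℝ) < q := by exact_mod_cast hq1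
      have := mul_pos (mul_pos (mul_pos (two_pos (α := ℝ)) hq') (Psi_pos (q + 2) x)) hh
      linarith
    by_contra hh
    push Not at hh
    have h4 : 1 ≤ ‖x‖ ^ 2 := by nlinarith
    have hq' : (0 : ℝ) < q * lam := by
      have : (0 : ℝ) < q := by exact_mod_cast hq1
      positivity
    nlinarith [mul_le_mul_of_nonneg_right hq (show (0 : ℝ) ≤ ‖x‖ ^ 2 by positivity),
      mul_le_mul_of_nonneg_left h4 hq'.le, mul_le_mul_of_nonneg_left h4 hlam.le]
  refine ⟨x, hsmall, ?_, hD, hH, b, ?_⟩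
  · have hPx : Psi n q x ≤ 2 ^ q := by
      exact Psi_le _ _
    have h1 := mul_le_mul_of_nonneg_left hPx hA0.le
    have h2 : 0 < A * ((3 / 2 : ℝ) ^ q)⁻¹ := by positivity
    have h3 : g x = w x - A * Psi n q x - ⟪z, x⟫ := rfl
    linarith
  · rw [le_div_iff₀ hlam]
    have := mul_le_mul_of_nonneg_left hc2 hA0.le
    linarith

lemma growth_unit (n : ℕ) {lam Lam : ℝ} (hlam : 0 < lam) (hL : lam ≤ Lam) :
    ∃ C : ℝ, 1 ≤ C ∧ ∃ K : ℝ, 0 < K ∧ ∀ w : EuclideanSpace ℝ (Fin n) → ℝ,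
      ContDiff ℝ (⊤ : ℕ∞) w → (∀ x, 0 ≤ w x) → SuperSol lam Lam w →
      ∀ y : EuclideanSpace ℝ (Fin n), ‖y‖ ≤ 1 → w y ≤ 1 →
      volume (Metric.ball (0 : EuclideanSpace ℝ (Fin n)) 1) ≤
        ENNReal.ofReal K * volume ({x | w x ≤ C} ∩ Metric.ball 0 1) := by
  obtain ⟨q, hq⟩ := exists_nat_ge (n * Lam / lam)
  have hLam : 0 < Lam := hlam.trans_le hL
  replace hq : n * Lam ≤ ((q + 1 : ℕ) : ℝ) * lam := by
    rw [div_le_iff₀ hlam] at hq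
    push_cast
    linarith
  have hq1 : 1 ≤ q + 1 := by omega
  generalize q + 1 = q at hq hq1
  have hα : 0 < ((3 / 2 : ℝ) ^ q)⁻¹ - ((9 / 2 : ℝ) ^ q)⁻¹ := by
    rw [sub_pos]
    apply inv_strictAnti₀ (by positivity)
    exact pow_lt_pow_left₀ (by norm_num) (by norm_num) (by omega)
  set α := ((3 / 2 : ℝ) ^ q)⁻¹ - ((9 / 2 : ℝ) ^ q)⁻¹
  set A : ℝ := 5 / α with hAdef
  have hA0 : 0 < A := by positivity
  have hA : 5 ≤ A * α := by rw [hAdef]; field_simp; rfl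
  set K0 : ℝ := A * (2 * q * 2 ^ (q + 1) * (n * Lam)) / lam + 1 with hK0
  have hK0p : 0 < K0 := by positivity
  refine ⟨A * 2 ^ q + 3, by have : 0 < A * 2 ^ q := by positivity
                            linarith, K0 ^ n, by positivity, ?_⟩
  intro w hw hw0 hsup y hy hwy
  set W : EuclideanSpace ℝ (Fin n) → ℝ := fun y => w y - A * Psi n q y with hWdef
  have hAP : ContDiff ℝ (⊤ : ℕ∞) (fun y => A * Psi n q y) := contDiff_const.mul (Psi_smooth q)
  have hW : ContDiff ℝ (⊤ : ℕ∞) W := hw.sub hAP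
  set J := (InnerProductSpace.toDual ℝ
    (EuclideanSpace ℝ (Fin n))).symm.toContinuousLinearEquiv.toContinuousLinearMap with hJ
  have hJi : ∀ l v, ⟪J l, v⟫ = l v := by intro l v; simp [hJ]
  set T : EuclideanSpace ℝ (Fin n) → EuclideanSpace ℝ (Fin n) := fun x => J (fderiv ℝ W x) with hT
  set T' : EuclideanSpace ℝ (Fin n) → EuclideanSpace ℝ (Fin n) →L[ℝ] EuclideanSpace ℝ (Fin n) :=
    fun x => J.comp (hs W x) with hT'
  have hder : ∀ x, HasFDerivAt T (T' x) x := fun x =>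
    J.hasFDerivAt.comp x ((smooth_fderiv hW).differentiable (by simp) x).hasFDerivAt
  set D : Set (EuclideanSpace ℝ (Fin n)) :=
    ({x | w x ≤ A * 2 ^ q + 3} ∩ Metric.ball 0 1) ∩ {x | |(T' x).det| ≤ K0 ^ n} with hD
  have hTc : Continuous T' := by
    have : Continuous (hs W) := (smooth_hs hW).continuous
    exact continuous_const.clm_comp this
  have hdetc : Continuous fun x => (T' x).det := ContinuousLinearMap.continuous_det.comp hTc
  have hDm : MeasurableSet D := by
    refine ((isClosed_le hw.continuous continuous_const).measurableSet.inter
      Metric.isOpen_ball.measurableSet).inter ?_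
    exact (isClosed_le hdetc.abs continuous_const).measurableSet
  have hsub : Metric.ball (0 : EuclideanSpace ℝ (Fin n)) 1 ⊆ T '' D := by
    intro z hz
    have hz1 : ‖z‖ < 1 := by simpa using hz
    obtain ⟨x, hx1, hx2, hx3, hx4, b, hb⟩ :=
      contact hlam hL q hq1 hq hA0 hA hw hw0 hsup hy hwy hz1
    refine ⟨x, ⟨⟨hx2, by simpa using hx1⟩, ?_⟩, ?_⟩
    · have key : ∀ v v', ⟪v, T' x v'⟫ = hs W x v' v := by
        intro v v'
        rw [real_inner_comm]
        exact hJi _ _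
      refine det_bound ((T' x) : EuclideanSpace ℝ (Fin n) →ₗ[ℝ] EuclideanSpace ℝ (Fin n)) ?_ ?_ b ?_
      · intro v v'
        rw [real_inner_comm]
        change ⟪v', T' x v⟫ = ⟪v, T' x v'⟫
        rw [key, key, hs_symm hW]
      · intro v
        change 0 ≤ ⟪v, T' x v⟫
        rw [key]
        exact hx4 v
      · change ∑ i, ⟪b i, T' x (b i)⟫ ≤ K0
        simp_rw [key]
        refine hb.trans ?_
        rw [hK0]
        linarith
    · apply ext_inner_right ℝ
      intro v
      rw [hT]
      simp only
      rw [hJi]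
      exact hx3 v
  calc volume (Metric.ball (0 : EuclideanSpace ℝ (Fin n)) 1) ≤ volume (T '' D) := measure_mono hsub
    _ ≤ ∫⁻ x in D, ENNReal.ofReal |(T' x).det| :=
        addHaar_image_le_lintegral_abs_det_fderiv volume hDm
          (fun x _ => (hder x).hasFDerivWithinAt)
    _ ≤ ∫⁻ _x in D, ENNReal.ofReal (K0 ^ n) :=
        setLIntegral_mono measurable_const fun x hx => ENNReal.ofReal_le_ofReal hx.2
    _ = ENNReal.ofReal (K0 ^ n) * volume D := by simp
    _ ≤ _ := by gcongr; exact Set.inter_subset_left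

end growth2

section density
open MeasureTheory
open scoped Pointwise

lemma D1_affine {n : ℕ} {w : EuclideanSpace ℝ (Fin n) → ℝ} (hw : ContDiff ℝ (⊤ : ℕ∞) w)
    (x0 : EuclideanSpace ℝ (Fin n)) (d c : ℝ) (b z : EuclideanSpace ℝ (Fin n)) :
    D1 (fun z => c * w (x0 + d • z)) b z = (c * d) * D1 w b (x0 + d • z) := by
  have h1 : HasFDerivAt (fun z : EuclideanSpace ℝ (Fin n) => x0 + d • z)
      (d • ContinuousLinearMap.id ℝ (EuclideanSpace ℝ (Fin n))) z :=
    ((hasFDerivAt_id z).const_smul d).const_add x0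
  have h2 : HasFDerivAt w (fderiv ℝ w (x0 + d • z)) (x0 + d • z) :=
    (hw.differentiable (by simp) _).hasFDerivAt
  have h3 := (h2.comp z h1).const_mul c
  unfold D1
  have h4 : fderiv ℝ (fun z => c * w (x0 + d • z)) z = _ := h3.fderiv
  rw [h4]
  simp
  ring

lemma hs_affine {n : ℕ} {w : EuclideanSpace ℝ (Fin n) → ℝ} (hw : ContDiff ℝ (⊤ : ℕ∞) w)
    (x0 : EuclideanSpace ℝ (Fin n)) (d c : ℝ) (a b z : EuclideanSpace ℝ (Fin n)) :
    hs (fun z => c * w (x0 + d • z)) z a b = (c * d * d) * hs w (x0 + d • z) a b := by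
  have hs1 : ContDiff ℝ (⊤ : ℕ∞) (fun z => c * w (x0 + d • z)) :=
    contDiff_const.mul (hw.comp (contDiff_const.add (contDiff_id.const_smul d)))
  rw [hs_eq_D1 hs1, hs_eq_D1 hw]
  have : D1 (fun z => c * w (x0 + d • z)) b = fun z => (c * d) * D1 w b (x0 + d • z) := by
    funext z; exact D1_affine hw x0 d c b z
  rw [this, D1_affine (smooth_D1 hw b)]

lemma growth_scaled (n : ℕ) {lam Lam : ℝ} (hlam : 0 < lam) (hL : lam ≤ Lam) :
    ∃ C : ℝ, 1 ≤ C ∧ ∃ K : ℝ, 0 < K ∧ ∀ w : EuclideanSpace ℝ (Fin n) → ℝ,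
      ContDiff ℝ (⊤ : ℕ∞) w → (∀ x, 0 ≤ w x) → SuperSol lam Lam w →
      ∀ (x0 y : EuclideanSpace ℝ (Fin n)) (d η : ℝ), 0 < d → 0 < η → dist y x0 ≤ d → w y ≤ η →
      volume (Metric.ball x0 d) ≤
        ENNReal.ofReal K * volume ({x | w x ≤ C * η} ∩ Metric.ball x0 d) := by
  obtain ⟨C, hC, K, hK, H⟩ := growth_unit n hlam hL
  refine ⟨C, hC, K, hK, ?_⟩
  intro w hw hw0 hsup x0 y d η hd hη hy hwy
  have hW : ContDiff ℝ (⊤ : ℕ∞) (fun z => η⁻¹ * w (x0 + d • z)) :=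
    contDiff_const.mul (hw.comp (contDiff_const.add (contDiff_id.const_smul d)))
  have h1 := H (fun z => η⁻¹ * w (x0 + d • z)) hW (fun z => mul_nonneg (by positivity) (hw0 _)) ?_
    (d⁻¹ • (y - x0)) ?_ ?_
  · have key : ∀ s : Set (EuclideanSpace ℝ (Fin n)),
        volume ((fun z => x0 + d • z) ⁻¹' s) = ENNReal.ofReal ((d⁻¹) ^ n) * volume s := by
      intro s
      have : (fun z => x0 + d • z) ⁻¹' s = d⁻¹ • ((fun z => x0 + z) ⁻¹' s) := by
        ext z
        rw [Set.mem_smul_set_iff_inv_smul_mem₀ (by positivity)]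
        simp
      rw [this, Measure.addHaar_smul, measure_preimage_add, abs_of_pos (by positivity)]
      simp
    have e1 : Metric.ball (0 : EuclideanSpace ℝ (Fin n)) 1 = (fun z => x0 + d • z) ⁻¹' Metric.ball x0 d := by
      ext z
      simp [norm_smul, abs_of_pos hd, hd]
    have e2 : {x | η⁻¹ * w (x0 + d • x) ≤ C} ∩ Metric.ball (0 : EuclideanSpace ℝ (Fin n)) 1 =
        (fun z => x0 + d • z) ⁻¹' ({x | w x ≤ C * η} ∩ Metric.ball x0 d) := by
      rw [Set.preimage_inter, ← e1]
      congr 1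
      ext z
      simp only [Set.mem_ofPred_eq, Set.mem_preimage]
      rw [inv_mul_le_iff₀ hη, mul_comm]
    rw [e2, e1, key, key, mul_left_comm] at h1
    rwa [ENNReal.mul_le_mul_iff_right] at h1
    · simp only [ne_eq, ENNReal.ofReal_eq_zero, not_le]; positivity
    · exact ENNReal.ofReal_ne_top
  · intro z
    obtain ⟨b, f, hf, hb⟩ := hsup (x0 + d • z)
    refine ⟨b, f, hf, ?_⟩
    simp_rw [hs_affine hw]
    have : ∑ i, f i * (η⁻¹ * d * d * hs w (x0 + d • z) (b i) (b i)) =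
        (η⁻¹ * d * d) * ∑ i, f i * hs w (x0 + d • z) (b i) (b i) := by
      rw [Finset.mul_sum]; exact Finset.sum_congr rfl fun i _ => by ring
    rw [this]
    exact mul_nonpos_of_nonneg_of_nonpos (by positivity) hb
  · rw [norm_smul, ← dist_eq_norm, Real.norm_eq_abs, abs_of_pos (by positivity)]
    rw [inv_mul_le_iff₀ hd]; linarith
  · rw [smul_smul, mul_inv_cancel₀ hd.ne', one_smul, add_sub_cancel, inv_mul_le_iff₀ hη]
    linarith

lemma growth_step {n : ℕ} (hn : 0 < n) {C K : ℝ} 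
    {w : EuclideanSpace ℝ (Fin n) → ℝ} (hw : Continuous w)
    (H : ∀ (x0 y : EuclideanSpace ℝ (Fin n)) (d η : ℝ), 0 < d → 0 < η → dist y x0 ≤ d → w y ≤ η →
      volume (Metric.ball x0 d) ≤
        ENNReal.ofReal K * volume ({x | w x ≤ C * η} ∩ Metric.ball x0 d))
    {c R : ℝ} (hc : 0 < c) {x0 : EuclideanSpace ℝ (Fin n)} (hx0 : ‖x0‖ ≤ R) (hwx : w x0 ≤ c) :
    volume (Metric.ball 0 R \ {x | w x ≤ c}) ≤ ENNReal.ofReal (5 ^ n) * (ENNReal.ofReal K *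
      volume (({x | w x ≤ C * c} \ {x | w x ≤ c}) ∩ Metric.closedBall 0 (3 * R))) := by
  have : Nonempty (Fin n) := ⟨⟨0, hn⟩⟩
  set S : Set (EuclideanSpace ℝ (Fin n)) := {x | w x ≤ c} with hS
  have hSc : IsClosed S := isClosed_le hw continuous_const
  have hSn : S.Nonempty := ⟨x0, hwx⟩
  set t := Metric.ball (0 : EuclideanSpace ℝ (Fin n)) R \ S with ht
  set r : EuclideanSpace ℝ (Fin n) → ℝ := fun x => Metric.infDist x S with hr
  have hrpos : ∀ x ∈ t, 0 < r x := fun x hx => (hSc.notMem_iff_infDist_pos hSn).1 hx.2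
  have hr2 : ∀ x ∈ t, r x ≤ 2 * R := by
    intro x hx
    refine (Metric.infDist_le_dist_of_mem (show x0 ∈ S from hwx)).trans ?_
    have h1 : ‖x‖ < R := by simpa using hx.1
    rw [dist_eq_norm]
    linarith [norm_sub_le x x0]
  obtain ⟨v, hvt, hdis, hcov⟩ := Vitali.exists_disjoint_subfamily_covering_enlargement_closedBall
    t (fun x => x) r (2 * R) hr2 5 (by norm_num)
  have hvc : v.Countable := hdis.countable_of_nonempty_interior fun a ha =>
    (Metric.nonempty_ball.2 (hrpos a (hvt ha))).mono Metric.ball_subset_interior_closedBall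
  have : Countable v := hvc.to_subtype
  have hball : ∀ a ∈ v, {x | w x ≤ C * c} ∩ Metric.ball a (r a) ⊆
      ({x | w x ≤ C * c} \ S) ∩ Metric.closedBall 0 (3 * R) := by
    intro a ha x hx
    refine ⟨⟨hx.1, fun hxS => ?_⟩, ?_⟩
    · have := Metric.infDist_le_dist_of_mem (x := a) hxS
      have h2 := hx.2
      rw [Metric.mem_ball, dist_comm] at h2
      exact absurd h2 (not_lt.2 this)
    · have h1 : ‖a‖ < R := by simpa using (hvt ha).1
      have h2 := hr2 a (hvt ha)
      have h3 := hx.2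
      rw [Metric.mem_ball, dist_eq_norm] at h3
      simp only [Metric.mem_closedBall, dist_zero_right]
      have := norm_add_le (x - a) a
      rw [sub_add_cancel] at this
      linarith
  calc volume t ≤ volume (⋃ a ∈ v, Metric.closedBall a (5 * r a)) := by
        refine measure_mono fun x hx => ?_
        obtain ⟨b, hb, hxb⟩ := hcov x hx
        exact Set.mem_biUnion hb (hxb (Metric.mem_closedBall_self (hrpos x hx).le))
    _ ≤ ∑' a : v, volume (Metric.closedBall (a : EuclideanSpace ℝ (Fin n)) (5 * r a)) :=
        measure_biUnion_le volume hvc _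
    _ ≤ ∑' a : v, ENNReal.ofReal (5 ^ n) * (ENNReal.ofReal K *
          volume ({x | w x ≤ C * c} ∩ Metric.ball (a : EuclideanSpace ℝ (Fin n)) (r a))) := by
        refine ENNReal.tsum_le_tsum fun a => ?_
        rw [Measure.addHaar_closedBall_mul_of_pos _ _ (by norm_num : (0:ℝ) < 5),
          Measure.addHaar_closedBall_eq_addHaar_ball, ← Measure.addHaar_ball_center volume (a : EuclideanSpace ℝ (Fin n))]
        rw [finrank_euclideanSpace_fin]
        gcongr
        obtain ⟨y, hy, hyd⟩ := hSc.exists_infDist_eq_dist hSn (a : EuclideanSpace ℝ (Fin n))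
        exact H a y (r a) c (hrpos _ (hvt a.2)) hc (by rw [dist_comm, ← hyd]) hy
    _ = ENNReal.ofReal (5 ^ n) * (ENNReal.ofReal K * ∑' a : v, 
          volume ({x | w x ≤ C * c} ∩ Metric.ball (a : EuclideanSpace ℝ (Fin n)) (r a))) := by
        rw [ENNReal.tsum_mul_left, ENNReal.tsum_mul_left]
    _ = ENNReal.ofReal (5 ^ n) * (ENNReal.ofReal K * volume (⋃ a ∈ v,
          ({x | w x ≤ C * c} ∩ Metric.ball a (r a)))) := by
        rw [measure_biUnion hvc]
        · intro a ha b hb hab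
          refine (hdis ha hb hab).mono ?_ ?_ <;>
          exact Set.inter_subset_right.trans Metric.ball_subset_closedBall
        · intro a _
          exact (isClosed_le hw continuous_const).measurableSet.inter Metric.isOpen_ball.measurableSet
    _ ≤ _ := by
        gcongr
        exact Set.iUnion₂_subset hball

lemma density {n : ℕ} (hn : 0 < n) {lam Lam : ℝ} (hlam : 0 < lam) (hL : lam ≤ Lam) (θ : ℝ)
    (hθ : 0 < θ) :
    ∃ C' : ℝ, 1 ≤ C' ∧ ∀ w : EuclideanSpace ℝ (Fin n) → ℝ,
      ContDiff ℝ (⊤ : ℕ∞) w → (∀ x, 0 ≤ w x) → SuperSol lam Lam w →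
      ∀ (x0 : EuclideanSpace ℝ (Fin n)) (R η : ℝ), 0 < R → 0 < η → ‖x0‖ ≤ R → w x0 ≤ η →
      volume (Metric.ball 0 R \ {x | w x ≤ C' * η}) ≤ ENNReal.ofReal θ *
        volume (Metric.ball (0 : EuclideanSpace ℝ (Fin n)) R) := by
  obtain ⟨C, hC, K, hK, H⟩ := growth_scaled n hlam hL
  obtain ⟨m, hm⟩ := exists_nat_ge (5 ^ n * K * 3 ^ n / θ)
  have hC0 : 0 < C := by linarith
  have : Nonempty (Fin n) := ⟨⟨0, hn⟩⟩
  have hm0 : (0:ℝ) < m := lt_of_lt_of_le (by positivity) hm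
  refine ⟨C ^ m, one_le_pow₀ hC, ?_⟩
  intro w hw hw0 hsup x0 R η hR hη hx0 hwx
  have hmono : ∀ k l : ℕ, k ≤ l → {x | w x ≤ C ^ k * η} ⊆ {x | w x ≤ C ^ l * η} := by
    intro k l hkl x hx
    rw [Set.mem_ofPred_eq] at hx ⊢
    refine le_trans hx (mul_le_mul_of_nonneg_right (pow_le_pow_right₀ hC hkl) hη.le)
  have hdm : ∀ k : ℕ, MeasurableSet {x | w x ≤ C ^ k * η} := fun k =>
    (isClosed_le hw.continuous continuous_const).measurableSet
  have step : ∀ k : ℕ, volume (Metric.ball 0 R \ {x | w x ≤ C ^ k * η}) ≤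
      ENNReal.ofReal (5 ^ n) * (ENNReal.ofReal K * volume (({x | w x ≤ C ^ (k + 1) * η} \
        {x | w x ≤ C ^ k * η}) ∩ Metric.closedBall 0 (3 * R))) := by
    intro k
    have h0 : w x0 ≤ C ^ k * η := hwx.trans (le_mul_of_one_le_left hη.le (one_le_pow₀ hC))
    have := growth_step hn hw.continuous (H w hw hw0 hsup) (c := C ^ k * η) (by positivity) hx0 h0
    rwa [← mul_assoc C, ← pow_succ'] at this
  have hsum : ∑ k ∈ Finset.range m, volume (({x | w x ≤ C ^ (k + 1) * η} \
        {x | w x ≤ C ^ k * η}) ∩ Metric.closedBall 0 (3 * R)) ≤ volume (Metric.closedBall (0 : EuclideanSpace ℝ (Fin n)) (3 * R)) := by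
    rw [← measure_biUnion_finset]
    · exact measure_mono (Set.iUnion₂_subset fun k _ => Set.inter_subset_right)
    · have aux : ∀ i j : ℕ, i < j → Disjoint (({x | w x ≤ C ^ (i + 1) * η} \
        {x | w x ≤ C ^ i * η}) ∩ Metric.closedBall 0 (3 * R)) (({x | w x ≤ C ^ (j + 1) * η} \
        {x | w x ≤ C ^ j * η}) ∩ Metric.closedBall 0 (3 * R)) := by
        intro i j hij
        rw [Set.disjoint_left]
        intro x hx hx'
        exact hx'.1.2 (hmono (i + 1) j hij hx.1.1)
      intro i _ j _ hij
      rcases lt_or_gt_of_ne hij with h | h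
      · exact aux i j h
      · exact (aux j i h).symm
    · intro k _
      exact ((hdm _).diff (hdm _)).inter Metric.isClosed_closedBall.measurableSet
  have h1 : (m : ENNReal) * volume (Metric.ball 0 R \ {x | w x ≤ C ^ m * η}) ≤
      ENNReal.ofReal (5 ^ n) * (ENNReal.ofReal K * (ENNReal.ofReal (3 ^ n) * volume (Metric.ball (0 : EuclideanSpace ℝ (Fin n)) R))) := by
    calc (m : ENNReal) * volume (Metric.ball 0 R \ {x | w x ≤ C ^ m * η}) 
        = ∑ k ∈ Finset.range m, volume (Metric.ball 0 R \ {x | w x ≤ C ^ m * η}) := by simp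
      _ ≤ ∑ k ∈ Finset.range m, ENNReal.ofReal (5 ^ n) * (ENNReal.ofReal K * volume (({x | w x ≤ C ^ (k + 1) * η} \
        {x | w x ≤ C ^ k * η}) ∩ Metric.closedBall 0 (3 * R))) := by
          refine Finset.sum_le_sum fun k hk => le_trans (measure_mono ?_) (step k)
          exact Set.sdiff_subset_sdiff_right (hmono k m (Finset.mem_range.1 hk).le)
      _ = ENNReal.ofReal (5 ^ n) * (ENNReal.ofReal K * ∑ k ∈ Finset.range m, volume (({x | w x ≤ C ^ (k + 1) * η} \
        {x | w x ≤ C ^ k * η}) ∩ Metric.closedBall 0 (3 * R))) := by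
          rw [Finset.mul_sum, Finset.mul_sum]
      _ ≤ ENNReal.ofReal (5 ^ n) * (ENNReal.ofReal K * volume (Metric.closedBall (0 : EuclideanSpace ℝ (Fin n)) (3 * R))) := by
          gcongr
      _ = _ := by
          rw [Measure.addHaar_closedBall_mul_of_pos _ _ (by norm_num : (0:ℝ) < 3),
            Measure.addHaar_closedBall_eq_addHaar_ball, finrank_euclideanSpace_fin]
  have h2 : ENNReal.ofReal (5 ^ n) * (ENNReal.ofReal K * (ENNReal.ofReal (3 ^ n) * volume (Metric.ball (0 : EuclideanSpace ℝ (Fin n)) R)))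
      ≤ (m : ENNReal) * (ENNReal.ofReal θ * volume (Metric.ball (0 : EuclideanSpace ℝ (Fin n)) R)) := by
    rw [← mul_assoc, ← mul_assoc, ← mul_assoc, ← ENNReal.ofReal_mul (by positivity), ← ENNReal.ofReal_mul (by positivity),
      ← ENNReal.ofReal_natCast, ← ENNReal.ofReal_mul (by positivity)]
    refine mul_le_mul' (ENNReal.ofReal_le_ofReal ?_) le_rfl
    rwa [div_le_iff₀ hθ] at hm
  have h3 := h1.trans h2
  rwa [ENNReal.mul_le_mul_iff_right] at h3
  · exact_mod_cast hm0.ne'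
  · simp

lemma joint {n : ℕ} (hn : 0 < n) {lam Lam : ℝ} (hlam : 0 < lam) (hL : lam ≤ Lam)
    (w : Fin n → EuclideanSpace ℝ (Fin n) → ℝ)
    (hw : ∀ i, ContDiff ℝ (⊤ : ℕ∞) (w i)) (hw0 : ∀ i x, 0 ≤ w i x)
    (hsup : ∀ i, SuperSol lam Lam (w i)) (hinf : ∀ i, ∀ η > 0, ∃ x, w i x ≤ η) (δ : ℝ) (hδ : 0 < δ) :
    ∃ x, ∀ i, w i x ≤ δ := by
  obtain ⟨C, hC, H⟩ := density hn hlam hL (1 / (n + 1)) (by positivity)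
  have hC0 : 0 < C := by linarith
  choose y hy using fun i => hinf i (δ / C) (by positivity)
  set R : ℝ := 1 + ∑ i, ‖y i‖ with hR
  have hyR : ∀ i, ‖y i‖ ≤ R := by
    intro i
    have := Finset.single_le_sum (f := fun i => ‖y i‖) (fun j _ => norm_nonneg (y j)) (Finset.mem_univ i)
    linarith
  have hR0 : 0 < R := by
    have : 0 ≤ ∑ i, ‖y i‖ := Finset.sum_nonneg fun i _ => norm_nonneg _
    linarith
  have hd : ∀ i, volume (Metric.ball 0 R \ {x | w i x ≤ δ}) ≤ ENNReal.ofReal (1 / (n + 1)) *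
        volume (Metric.ball (0 : EuclideanSpace ℝ (Fin n)) R) := by
    intro i
    have := H (w i) (hw i) (hw0 i) (hsup i) (y i) R (δ / C) hR0 (by positivity) (hyR i) (hy i)
    rwa [mul_div_cancel₀ _ hC0.ne'] at this
  by_contra! hcon
  have hsub : Metric.ball (0 : EuclideanSpace ℝ (Fin n)) R ⊆ ⋃ i, (Metric.ball 0 R \ {x | w i x ≤ δ}) := by
    intro x hx
    obtain ⟨i, hi⟩ := hcon x
    exact Set.mem_iUnion.2 ⟨i, hx, by simpa using hi⟩
  have hpos : 0 < volume (Metric.ball (0 : EuclideanSpace ℝ (Fin n)) R) := Metric.measure_ball_pos _ _ hR0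
  have hfin : volume (Metric.ball (0 : EuclideanSpace ℝ (Fin n)) R) < ⊤ := measure_ball_lt_top
  have h1 : volume (Metric.ball (0 : EuclideanSpace ℝ (Fin n)) R) ≤ ENNReal.ofReal (n * (1 / (n + 1))) *
        volume (Metric.ball (0 : EuclideanSpace ℝ (Fin n)) R) := by
    calc _ ≤ ∑ i, volume (Metric.ball 0 R \ {x | w i x ≤ δ}) :=
          (measure_mono hsub).trans (measure_iUnion_fintype_le _ _)
      _ ≤ ∑ i : Fin n, ENNReal.ofReal (1 / (n + 1)) *
        volume (Metric.ball (0 : EuclideanSpace ℝ (Fin n)) R) := Finset.sum_le_sum fun i _ => hd i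
      _ = _ := by
        rw [Finset.sum_const, Finset.card_univ, Fintype.card_fin, nsmul_eq_mul, ← mul_assoc,
          ENNReal.ofReal_mul (by positivity), ENNReal.ofReal_natCast]
  have h2 : ENNReal.ofReal (n * (1 / (n + 1))) < 1 := by
    rw [ENNReal.ofReal_lt_one, mul_one_div, div_lt_one (by positivity)]
    linarith
  have h3 : ENNReal.ofReal (n * (1 / (n + 1))) *
        volume (Metric.ball (0 : EuclideanSpace ℝ (Fin n)) R) < 1 * volume (Metric.ball (0 : EuclideanSpace ℝ (Fin n)) R) :=
    ENNReal.mul_lt_mul_left hpos.ne' hfin.ne h2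
  rw [one_mul] at h3
  exact absurd h1 (not_le.2 h3)

end density

section algebra
open scoped RealInnerProductSpace

/-- admissible eigenvalue vectors -/
def Adm {n : ℕ} (p : ℕ) (lam : Fin n → ℝ) : Prop :=
  lam ∈ GammaHat n p ∧ lam ∈ GammaHat n (p - 1) ∧ pMA n p lam = 1

/-- the `p`-subsets -/
def PSub (n p : ℕ) : Finset (Finset (Fin n)) := (Finset.univ : Finset (Fin n)).powersetCard p

/-- logarithmic derivative coefficients -/
def Fc {n : ℕ} (p : ℕ) (lam : Fin n → ℝ) (i : Fin n) : ℝ :=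
  ∑ s ∈ PSub n p, if i ∈ s then (∑ j ∈ s, lam j)⁻¹ else 0

/-- orthonormal frame diagonalising the Hessian -/
def Frame {n : ℕ} (p : ℕ) (u : EuclideanSpace ℝ (Fin n) → ℝ) (x : EuclideanSpace ℝ (Fin n))
    (b : OrthonormalBasis (Fin n) ℝ (EuclideanSpace ℝ (Fin n))) (lam : Fin n → ℝ) : Prop :=
  (∀ i j, hs u x (b i) (b j) = if i = j then lam i else 0) ∧ Adm p lam

variable {n p : ℕ} {u : EuclideanSpace ℝ (Fin n) → ℝ}

lemma mem_PSub {s : Finset (Fin n)} : s ∈ PSub n p ↔ s.card = p := by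
  simp [PSub, Finset.mem_powersetCard]

lemma exists_frame (hu : ContDiff ℝ (⊤ : ℕ∞) u) (x : EuclideanSpace ℝ (Fin n))
    (hadm : hessEigen u x ∈ GammaHat n p) (heq : pMA n p (hessEigen u x) = 1)
    (hconv : hessEigen u x ∈ GammaHat n (p - 1)) :
    ∃ b lam, Frame p u x b lam := by
  have hent : ∀ i j, hessianMatrix u x i j = hs u x (EuclideanSpace.single i 1) (EuclideanSpace.single j 1) := by
    intro i j
    simp [hessianMatrix, iteratedFDeriv_two_apply, hs]
  have hH : (hessianMatrix u x).IsHermitian := by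
    ext i j
    simp only [Matrix.conjTranspose_apply, star_trivial]
    rw [hent, hent, hs_symm hu]
  refine ⟨hH.eigenvectorBasis, hessEigen u x, ?_, hadm, hconv, heq⟩
  have hlam : hessEigen u x = hH.eigenvalues := by rw [hessEigen, dif_pos hH]
  rw [hlam]
  have hexp : ∀ a c : EuclideanSpace ℝ (Fin n), hs u x a c = ∑ k, a k * ((hessianMatrix u x).mulVec c) k := by
    intro a c
    have ha : a = ∑ k, a k • EuclideanSpace.single k (1:ℝ) := by
      ext j; simp [Finset.sum_apply, Pi.single_apply]
    have hc : c = ∑ k, c k • EuclideanSpace.single k (1:ℝ) := by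
      ext j; simp [Finset.sum_apply, Pi.single_apply]
    conv_lhs => rw [ha, hc]
    simp only [map_sum, map_smul, _root_.sum_apply, _root_.smul_apply,
      smul_eq_mul, Matrix.mulVec, dotProduct, hent]
    simp_rw [Finset.mul_sum]
    rw [Finset.sum_comm]
    refine Finset.sum_congr rfl fun i _ => ?_
    refine Finset.sum_congr rfl fun j _ => ?_
    ring
  intro i j
  rw [hexp, hH.mulVec_eigenvectorBasis]
  have h1 := hH.eigenvectorBasis.inner_eq_ite i j
  rw [PiLp.inner_apply] at h1
  have : ∑ k, (hH.eigenvectorBasis i) k * (hH.eigenvalues j • ⇑(hH.eigenvectorBasis j)) k =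
      hH.eigenvalues j * (if i = j then 1 else 0) := by
    rw [← h1, Finset.mul_sum]
    refine Finset.sum_congr rfl fun k _ => ?_
    simp
    ring
  rw [this]
  split_ifs with h
  · subst h; simp
  · simp

lemma Fc_sum (lam d : Fin n → ℝ) :
    ∑ i, Fc p lam i * d i = ∑ s ∈ PSub n p, (∑ j ∈ s, lam j)⁻¹ * ∑ i ∈ s, d i := by
  unfold Fc
  simp_rw [Finset.sum_mul]
  rw [Finset.sum_comm]
  refine Finset.sum_congr rfl fun s _ => ?_
  rw [Finset.mul_sum]
  simp_rw [ite_mul, zero_mul]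
  rw [← Finset.sum_filter]
  simp

lemma Adm.pos {lam : Fin n → ℝ} (h : Adm p lam) {s : Finset (Fin n)} (hs : s ∈ PSub n p) :
    0 < ∑ j ∈ s, lam j := h.1 s (mem_PSub.1 hs)

lemma Fc_lam {lam : Fin n → ℝ} (h : Adm p lam) : ∑ i, Fc p lam i * lam i = (PSub n p).card := by
  rw [Fc_sum, Finset.sum_congr rfl fun s hs => inv_mul_cancel₀ (h.pos hs).ne']
  simp

lemma Fc_nonneg {lam : Fin n → ℝ} (h : Adm p lam) (i : Fin n) : 0 ≤ Fc p lam i := by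
  refine Finset.sum_nonneg fun s hs => ?_
  split_ifs
  · exact (inv_pos.2 (h.pos hs)).le
  · exact le_rfl

lemma pMA_perm (σ : Equiv.Perm (Fin n)) (mu : Fin n → ℝ) :
    ∏ s ∈ PSub n p, ∑ i ∈ s, mu (σ i) = ∏ s ∈ PSub n p, ∑ i ∈ s, mu i := by
  refine Finset.prod_bij (fun s _ => s.map σ.toEmbedding) ?_ ?_ ?_ ?_
  · intro s hs
    rw [mem_PSub] at *
    simpa using hs
  · intro s _ t _ h
    exact Finset.map_injective _ h
  · intro t ht
    refine ⟨t.map σ.symm.toEmbedding, ?_, ?_⟩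
    · rw [mem_PSub] at *
      simpa using ht
    · ext i; simp
  · intro s _
    simp

lemma support_perm {lam mu : Fin n → ℝ} (h : Adm p lam) (h' : Adm p mu) (σ : Equiv.Perm (Fin n)) :
    ((PSub n p).card : ℝ) ≤ ∑ i, Fc p lam i * mu (σ i) := by
  rw [Fc_sum]
  have hpos : ∀ s ∈ PSub n p, 0 < ∑ i ∈ s, mu (σ i) := by
    intro s hs
    have := h'.1 (s.map σ.toEmbedding) (by simpa using mem_PSub.1 hs)
    simpa using this
  have hx : ∀ s ∈ PSub n p, 0 < (∑ j ∈ s, lam j)⁻¹ * ∑ i ∈ s, mu (σ i) := fun s hs =>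
    mul_pos (inv_pos.2 (h.pos hs)) (hpos s hs)
  have hlog : ∑ s ∈ PSub n p, Real.log ((∑ j ∈ s, lam j)⁻¹ * ∑ i ∈ s, mu (σ i)) = 0 := by
    rw [← Real.log_prod fun s hs => (hx s hs).ne']
    rw [Finset.prod_mul_distrib, Finset.prod_inv_distrib, pMA_perm]
    have e1 : ∏ s ∈ PSub n p, ∑ j ∈ s, lam j = 1 := h.2.2
    have e2 : ∏ s ∈ PSub n p, ∑ j ∈ s, mu j = 1 := h'.2.2
    rw [e1, e2]; simp
  have := Finset.sum_le_sum fun s hs => Real.log_le_sub_one_of_pos (hx s hs)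
  rw [hlog, Finset.sum_sub_distrib] at this
  simp at this
  linarith

lemma hs_frame {x : EuclideanSpace ℝ (Fin n)}
    {b : OrthonormalBasis (Fin n) ℝ (EuclideanSpace ℝ (Fin n))} {lam : Fin n → ℝ}
    (h : Frame p u x b lam) (a c : EuclideanSpace ℝ (Fin n)) :
    hs u x a c = ∑ k, ⟪b k, a⟫ * ⟪b k, c⟫ * lam k := by
  conv_lhs => rw [← b.sum_repr' a, ← b.sum_repr' c]
  simp only [map_sum, map_smul, _root_.sum_apply, _root_.smul_apply,
      smul_eq_mul, h.1]
  refine Finset.sum_congr rfl fun i _ => ?_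
  simp
  ring

/-- supporting inequality -/
lemma support {x : EuclideanSpace ℝ (Fin n)}
    {b : OrthonormalBasis (Fin n) ℝ (EuclideanSpace ℝ (Fin n))} {lam mu : Fin n → ℝ}
    (h : Adm p lam) (h' : Frame p u x b mu)
    (c : OrthonormalBasis (Fin n) ℝ (EuclideanSpace ℝ (Fin n))) :
    ((PSub n p).card : ℝ) ≤ ∑ i, Fc p lam i * hs u x (c i) (c i) := by
  set M : Matrix (Fin n) (Fin n) ℝ := fun i k => ⟪b k, c i⟫ ^ 2 with hM
  have hMd : M ∈ doublyStochastic ℝ (Fin n) := by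
    rw [mem_doublyStochastic_iff_sum]
    refine ⟨fun i j => sq_nonneg _, fun i => ?_, fun k => ?_⟩
    · have := b.sum_sq_norm_inner_right (c i)
      simpa [hM] using this
    · have := c.sum_sq_norm_inner_left (b k)
      simpa [hM] using this
  obtain ⟨w, hw0, hw1, hwM⟩ := exists_eq_sum_perm_of_mem_doublyStochastic hMd
  have hd : ∀ i, hs u x (c i) (c i) = ∑ σ, w σ * mu (σ i) := by
    intro i
    rw [hs_frame h']
    have e1 : ∀ k, ⟪b k, c i⟫ * ⟪b k, c i⟫ * mu k = ∑ σ : Equiv.Perm (Fin n), w σ * ((σ.permMatrix ℝ) i k * mu k) := by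
      intro k
      have : ⟪b k, c i⟫ * ⟪b k, c i⟫ = (∑ σ, w σ • σ.permMatrix ℝ) i k := by
        rw [hwM, hM]; ring
      rw [this, Matrix.sum_apply, Finset.sum_mul]
      refine Finset.sum_congr rfl fun σ _ => ?_
      simp [Matrix.smul_apply, mul_assoc]
    simp_rw [e1]
    rw [Finset.sum_comm]
    refine Finset.sum_congr rfl fun σ _ => ?_
    rw [← Finset.mul_sum]
    congr 1
    simp [Equiv.Perm.permMatrix, PEquiv.toMatrix_apply]
  simp_rw [hd, Finset.mul_sum]
  rw [Finset.sum_comm]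
  calc ((PSub n p).card : ℝ) = ∑ σ, w σ * ((PSub n p).card : ℝ) := by rw [← Finset.sum_mul, hw1, one_mul]
    _ ≤ ∑ σ, w σ * ∑ i, Fc p lam i * mu (σ i) :=
        Finset.sum_le_sum fun σ _ => mul_le_mul_of_nonneg_left (support_perm h h'.2 σ) (hw0 σ)
    _ = _ := by
        refine Finset.sum_congr rfl fun σ _ => ?_
        rw [Finset.mul_sum]
        refine Finset.sum_congr rfl fun i _ => ?_
        ring

end algebra

section keyalg
variable {n p : ℕ}

/-- the sum of all `1/λ_s` -/
def Ts {n : ℕ} (p : ℕ) (lam : Fin n → ℝ) : ℝ := ∑ s ∈ PSub n p, (∑ j ∈ s, lam j)⁻¹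

lemma Adm.le_sum (hp : 2 ≤ p) {lam : Fin n → ℝ} (h : Adm p lam) {s : Finset (Fin n)}
    (hs : s ∈ PSub n p) {i : Fin n} (hi : i ∈ s) : lam i < ∑ j ∈ s, lam j := by
  rw [← Finset.add_sum_erase s lam hi]
  have := h.2.1 (s.erase i) (by rw [Finset.card_erase_of_mem hi, mem_PSub.1 hs])
  linarith

lemma Fc_le_Ts {lam : Fin n → ℝ} (h : Adm p lam) (i : Fin n) : Fc p lam i ≤ Ts p lam := by
  refine Finset.sum_le_sum fun s hs => ?_
  split_ifs
  · exact le_rfl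
  · exact (inv_pos.2 (h.pos hs)).le

lemma Fc_total {lam : Fin n → ℝ} : ∑ i, Fc p lam i = p * Ts p lam := by
  have := Fc_sum (p := p) lam (fun _ => 1)
  simp only [mul_one] at this
  rw [this, Ts, Finset.mul_sum]
  refine Finset.sum_congr rfl fun s hs => ?_
  rw [Finset.sum_const, mem_PSub.1 hs]
  simp
  ring

lemma Fc_mul_le (hp : 2 ≤ p) {lam : Fin n → ℝ} (h : Adm p lam) {i : Fin n} (hi : 0 < lam i) :
    Fc p lam i ≤ (PSub n p).card / lam i := by
  rw [div_eq_mul_inv, ← nsmul_eq_mul, ← Finset.sum_const]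
  refine Finset.sum_le_sum fun s hs => ?_
  split_ifs with hh
  · exact inv_anti₀ hi (h.le_sum hp hs hh).le
  · exact (inv_pos.2 hi).le

lemma exists_PSub (hp : 2 ≤ p) (hpn : p ≤ n) (i : Fin n) : ∃ s ∈ PSub n p, i ∈ s := by
  obtain ⟨s, h1, h2⟩ := Finset.exists_superset_card_eq (s := {i}) (n := p) (by simp; omega) (by simpa using hpn)
  exact ⟨s, mem_PSub.2 h2, h1 (by simp)⟩

lemma Ts_nonneg {lam : Fin n → ℝ} (h : Adm p lam) : 0 ≤ Ts p lam :=
  Finset.sum_nonneg fun _ hs => (inv_pos.2 (h.pos hs)).le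

lemma sum_le_Ts {lam : Fin n → ℝ} (h : Adm p lam) {s : Finset (Fin n)}
    (hs : s ∈ PSub n p) : ∑ j ∈ s, lam j ≤ Ts p lam ^ ((PSub n p).card - 1) := by
  have h1 : (∑ j ∈ s, lam j) * ∏ t ∈ (PSub n p).erase s, ∑ j ∈ t, lam j = 1 := by
    rw [Finset.mul_prod_erase _ (fun t => ∑ j ∈ t, lam j) hs]; exact h.2.2
  have hpos : ∀ t ∈ (PSub n p).erase s, 0 < ∑ j ∈ t, lam j := fun t ht => h.pos (Finset.mem_of_mem_erase ht)
  have h2 : (∑ j ∈ s, lam j) = ∏ t ∈ (PSub n p).erase s, (∑ j ∈ t, lam j)⁻¹ := by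
    rw [Finset.prod_inv_distrib]
    exact eq_inv_of_mul_eq_one_left h1
  rw [h2, ← Finset.card_erase_of_mem hs, ← Finset.prod_const]
  refine Finset.prod_le_prod (fun t ht => (inv_pos.2 (hpos t ht)).le) fun t ht => ?_
  exact Finset.single_le_sum (f := fun t : Finset (Fin n) => (∑ j ∈ t, lam j)⁻¹) (fun t ht => (inv_pos.2 (h.pos ht)).le) (Finset.mem_of_mem_erase ht)

lemma lam_le_Ts (hp : 2 ≤ p) (hpn : p ≤ n) {lam : Fin n → ℝ} (h : Adm p lam) (i : Fin n) :
    lam i ≤ Ts p lam ^ ((PSub n p).card - 1) := by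
  obtain ⟨s, hs, hi⟩ := exists_PSub hp hpn i
  exact (h.le_sum hp hs hi).le.trans (sum_le_Ts h hs)

lemma Fc_swap (lam : Fin n → ℝ) (i j : Fin n) :
    Fc p lam j = ∑ s ∈ PSub n p, if i ∈ s then (∑ k ∈ s, lam (Equiv.swap j i k))⁻¹ else 0 := by
  unfold Fc
  symm
  refine Finset.sum_bij (fun s _ => s.map (Equiv.swap j i).toEmbedding) ?_ ?_ ?_ ?_
  · intro s hs
    rw [mem_PSub] at *
    simpa using hs
  · intro s _ t _ h
    exact Finset.map_injective _ h
  · intro t ht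
    refine ⟨t.map (Equiv.swap j i).toEmbedding, ?_, ?_⟩
    · rw [mem_PSub] at *
      simpa using ht
    · ext k; simp
  · intro s _
    have : j ∈ s.map (Equiv.swap j i).toEmbedding ↔ i ∈ s := by
      simp
    simp [this]

lemma key_alg (hp : 2 ≤ p) {lam : Fin n → ℝ} (h : Adm p lam) {m : Fin n}
    (hm : ∀ i, lam i ≤ lam m) (hm0 : 0 < lam m) (i : Fin n) :
    4 / 3 * (Fc p lam i - (2 * p * (PSub n p).card) / lam m) ≤
      2 * lam m * ((Fc p lam i - Fc p lam m) / (lam m - lam i)) := by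
  have hp' : (2:ℝ) ≤ p := by exact_mod_cast hp
  rcases eq_or_lt_of_le (hm i) with heq | hlt
  · rw [heq, sub_self, div_zero, mul_zero]
    have := Fc_mul_le hp h (i := i) (by rw [heq]; exact hm0)
    rw [heq] at this
    have h2 : ((PSub n p).card : ℝ) / lam m ≤ (2 * p * (PSub n p).card) / lam m := by
      gcongr
      have : (0:ℝ) ≤ (PSub n p).card := by positivity
      nlinarith
    linarith
  · have him : i ≠ m := by rintro rfl; exact lt_irrefl _ hlt
    have hd : 0 < lam m - lam i := by linarith
    have e1 : (Fc p lam i - Fc p lam m) / (lam m - lam i) = ∑ s ∈ PSub n p,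
        if i ∈ s then ((∑ j ∈ s, lam j)⁻¹ - (∑ k ∈ s, lam (Equiv.swap m i k))⁻¹) / (lam m - lam i) else 0 := by
      rw [Fc_swap lam i m, Fc, ← Finset.sum_sub_distrib, Finset.sum_div]
      refine Finset.sum_congr rfl fun s _ => ?_
      split_ifs <;> simp
    have e2 : Fc p lam i - (2 * p * (PSub n p).card) / lam m ≤ ∑ s ∈ PSub n p,
        if i ∈ s then ((∑ j ∈ s, lam j)⁻¹ - 2 * p / lam m) else 0 := by
      have : (2 * p * (PSub n p).card) / lam m = ∑ s ∈ PSub n p, 2 * p / lam m := by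
        rw [Finset.sum_const, nsmul_eq_mul]; ring
      rw [this, Fc, ← Finset.sum_sub_distrib]
      refine Finset.sum_le_sum fun s _ => ?_
      split_ifs
      · exact le_rfl
      · rw [zero_sub, neg_nonpos]; positivity
    refine (mul_le_mul_of_nonneg_left e2 (by norm_num)).trans ?_
    rw [e1, Finset.mul_sum, Finset.mul_sum]
    refine Finset.sum_le_sum fun s hs => ?_
    split_ifs with his
    swap
    · simp
    have hspos := h.pos hs
    by_cases hms : m ∈ s
    · have e3 : ∑ k ∈ s, lam (Equiv.swap m i k) = ∑ k ∈ s, lam k := by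
        refine Finset.sum_bij (fun k _ => Equiv.swap m i k) ?_ ?_ ?_ ?_
        · intro k hk
          simp only [Equiv.swap_apply_def]; split_ifs <;> assumption
        · intro a _ b _ hab; exact (Equiv.swap m i).injective hab
        · intro k hk
          refine ⟨Equiv.swap m i k, ?_, by simp⟩
          simp only [Equiv.swap_apply_def]; split_ifs <;> assumption
        · intro k _; rfl
      rw [e3, sub_self, zero_div, mul_zero]
      have h1 : (∑ j ∈ s, lam j)⁻¹ ≤ (lam m)⁻¹ := inv_anti₀ hm0 (h.le_sum hp hs hms).le
      have h2 : (lam m)⁻¹ ≤ 2 * p / lam m := by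
        rw [inv_eq_one_div]; gcongr; linarith
      linarith
    · have e3 : ∑ k ∈ s, lam (Equiv.swap m i k) = ∑ k ∈ s, lam k + (lam m - lam i) := by
        rw [← Finset.add_sum_erase s _ his, ← Finset.add_sum_erase s lam his, Equiv.swap_apply_right]
        have : ∑ k ∈ s.erase i, lam (Equiv.swap m i k) = ∑ k ∈ s.erase i, lam k := by
          refine Finset.sum_congr rfl fun k hk => ?_
          rw [Equiv.swap_apply_of_ne_of_ne]
          · rintro rfl; exact hms (Finset.mem_of_mem_erase hk)
          · exact Finset.ne_of_mem_erase hk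
        rw [this]; ring
      rw [e3]
      set S := ∑ k ∈ s, lam k with hS
      have hr : S - lam i = ∑ k ∈ s.erase i, lam k := by
        rw [hS, ← Finset.add_sum_erase s lam his]; ring
      have hrpos : 0 < S - lam i := by linarith [h.le_sum hp hs his]
      have hcd : (S⁻¹ - (S + (lam m - lam i))⁻¹) / (lam m - lam i) = S⁻¹ * (S + (lam m - lam i))⁻¹ := by
        have : S + (lam m - lam i) ≠ 0 := by linarith
        field_simp
        ring
      rw [hcd]
      have hW : 0 < S + (lam m - lam i) := by linarith
      by_cases hc : S - lam i ≤ lam m / 2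
      · have h1 : 4 / 3 * S⁻¹ ≤ 2 * lam m * (S⁻¹ * (S + (lam m - lam i))⁻¹) := by
          have : 2 / 3 ≤ lam m * (S + (lam m - lam i))⁻¹ := by
            rw [← div_eq_mul_inv, le_div_iff₀ hW]
            linarith
          have h3 := mul_le_mul_of_nonneg_left this (inv_pos.2 hspos).le
          nlinarith
        have h2 : 0 ≤ 2 * p / lam m := by positivity
        linarith
      · push Not at hc
        have hcard : (s.erase i).card = p - 1 := by rw [Finset.card_erase_of_mem his, mem_PSub.1 hs]
        obtain ⟨j, hj, hjr⟩ : ∃ j ∈ s.erase i, (S - lam i) / p ≤ lam j := by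
          apply Finset.exists_le_of_sum_le
          · rw [← Finset.card_pos]; omega
          · rw [← hr, Finset.sum_const, hcard, nsmul_eq_mul, mul_div_assoc', div_le_iff₀ (by linarith), mul_comm]
            gcongr
            omega
        have hjs := h.le_sum hp hs (Finset.mem_of_mem_erase hj)
        have h1 : lam m / (2 * p) ≤ S := by
          have : lam m / (2 * p) ≤ (S - lam i) / p := by
            rw [← div_div]; gcongr
          linarith
        have h2 : S⁻¹ ≤ 2 * p / lam m := by
          rw [← inv_div]; exact inv_anti₀ (by positivity) h1
        have h3 : 0 ≤ 2 * lam m * (S⁻¹ * (S + (lam m - lam i))⁻¹) := by positivity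
        linarith

end keyalg

section rotation
open scoped RealInnerProductSpace
variable {n p : ℕ} {u : EuclideanSpace ℝ (Fin n) → ℝ}

lemma eval_fderiv {G : EuclideanSpace ℝ (Fin n) → EuclideanSpace ℝ (Fin n) →L[ℝ] EuclideanSpace ℝ (Fin n) →L[ℝ] ℝ}
    (hG : ContDiff ℝ (⊤ : ℕ∞) G) (x e a c : EuclideanSpace ℝ (Fin n)) :
    D1 (fun y => G y a c) e x = fderiv ℝ G x e a c := by
  have h1 : HasFDerivAt G (fderiv ℝ G x) x := (hG.differentiable (by simp) x).hasFDerivAt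
  have h2 := (h1.clm_apply (hasFDerivAt_const a x)).clm_apply (hasFDerivAt_const c x)
  unfold D1
  rw [h2.fderiv]
  simp

lemma line_curve {F : Type*} [NormedAddCommGroup F] [NormedSpace ℝ F] {G : EuclideanSpace ℝ (Fin n) → F}
    (hG : ContDiff ℝ (⊤ : ℕ∞) G) (x e : EuclideanSpace ℝ (Fin n)) (t : ℝ) :
    HasDerivAt (fun t : ℝ => G (x + t • e)) (fderiv ℝ G (x + t • e) e) t := by
  have h1 : HasFDerivAt G (fderiv ℝ G (x + t • e)) (x + t • e) := (hG.differentiable (by simp) _).hasFDerivAt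
  have h2 : HasDerivAt (fun t : ℝ => x + t • e) e t := by
    simpa using ((hasDerivAt_id t).smul_const e).const_add x
  exact h1.comp_hasDerivAt t h2

lemma bil_deriv {H : ℝ → EuclideanSpace ℝ (Fin n) →L[ℝ] EuclideanSpace ℝ (Fin n) →L[ℝ] ℝ}
    {H' : EuclideanSpace ℝ (Fin n) →L[ℝ] EuclideanSpace ℝ (Fin n) →L[ℝ] ℝ}
    {V W : ℝ → EuclideanSpace ℝ (Fin n)} {V' W' : EuclideanSpace ℝ (Fin n)} {t : ℝ}
    (hH : HasDerivAt H H' t) (hV : HasDerivAt V V' t) (hW : HasDerivAt W W' t) :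
    HasDerivAt (fun t => H t (V t) (W t)) (H' (V t) (W t) + H t V' (W t) + H t (V t) W') t := by
  have := (hH.clm_apply hV).clm_apply hW
  simpa using this

lemma exp_skew (e β : EuclideanSpace ℝ (Fin n)) :
    ∃ (B : EuclideanSpace ℝ (Fin n) →L[ℝ] EuclideanSpace ℝ (Fin n))
      (U : ℝ → EuclideanSpace ℝ (Fin n) ≃ₗᵢ[ℝ] EuclideanSpace ℝ (Fin n)),
      (∀ v, B v = ⟪e, v⟫ • β - ⟪β, v⟫ • e) ∧ (∀ v, U 0 v = v) ∧
      ∀ v t, HasDerivAt (fun t => U t v) (U t (B v)) t := by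
  set B : EuclideanSpace ℝ (Fin n) →L[ℝ] EuclideanSpace ℝ (Fin n) :=
    (innerSL ℝ e).smulRight β - (innerSL ℝ β).smulRight e with hB
  have hBv : ∀ v, B v = ⟪e, v⟫ • β - ⟪β, v⟫ • e := by intro v; simp [hB]
  have hskew : ∀ t : ℝ, t • B ∈ skewAdjoint (EuclideanSpace ℝ (Fin n) →L[ℝ] EuclideanSpace ℝ (Fin n)) := by
    intro t
    rw [skewAdjoint.mem_iff, star_smul, star_trivial]
    suffices hh : star B = -B by
      rw [hh]; ext v : 1; simp
    rw [ContinuousLinearMap.star_eq_adjoint]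
    symm
    rw [ContinuousLinearMap.eq_adjoint_iff]
    intro x y
    simp only [_root_.neg_apply, hBv, inner_neg_left, inner_sub_left, inner_sub_right, inner_smul_left, inner_smul_right]
    simp only [conj_trivial]
    rw [real_inner_comm x β, real_inner_comm x e]
    ring
  let +nondep : NormedAlgebra ℚ (EuclideanSpace ℝ (Fin n) →L[ℝ] EuclideanSpace ℝ (Fin n)) := .restrictScalars ℚ ℝ _
  refine ⟨B, fun t => Unitary.linearIsometryEquiv ⟨NormedSpace.exp (t • B), NormedSpace.exp_mem_unitary_of_mem_skewAdjoint (hskew t)⟩, hBv, ?_, ?_⟩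
  · intro v
    change (NormedSpace.exp ((0:ℝ) • B)) v = v
    have h0 : (0:ℝ) • B = 0 := by ext v : 1; simp
    rw [h0, NormedSpace.exp_zero]
    rfl
  · intro v t
    change HasDerivAt (fun t : ℝ => (NormedSpace.exp (t • B)) v) ((NormedSpace.exp (t • B)) (B v)) t
    have := (hasDerivAt_exp_smul_const (𝕂 := ℝ) B t).clm_apply (hasDerivAt_const t v)
    simpa using this

lemma rot_ineq (hu : ContDiff ℝ (⊤ : ℕ∞) u) (hF : ∀ x, ∃ b lam, Frame p u x b lam)
    {x : EuclideanSpace ℝ (Fin n)}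
    {b : OrthonormalBasis (Fin n) ℝ (EuclideanSpace ℝ (Fin n))} {lam : Fin n → ℝ}
    (h : Frame p u x b lam) (m : Fin n) :
    ∑ i, 2 * ((Fc p lam i - Fc p lam m) / (lam m - lam i)) *
        (D1 (fun y => hs u y (b m) (b m)) (b i) x) ^ 2 ≤
      ∑ i, Fc p lam i * hs (fun y => hs u y (b m) (b m)) x (b i) (b i) := by
  set e := b m with he
  set Y : Fin n → ℝ := fun i => D1 (fun y => hs u y e e) (b i) x with hY
  set bc : Fin n → ℝ := fun i => Y i / (lam m - lam i) with hbc
  have hbm : bc m = 0 := by simp [hbc]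
  set β : EuclideanSpace ℝ (Fin n) := ∑ i, bc i • b i with hβ
  have hin : ∀ i, ⟪β, b i⟫ = bc i := by
    intro i
    rw [hβ, sum_inner]
    simp [inner_smul_left, b.inner_eq_ite]
  obtain ⟨B, U, hB, hU0, hU⟩ := exp_skew e β
  have hHs := smooth_hs hu
  have hH1s : ContDiff ℝ (⊤ : ℕ∞) (fun y => fderiv ℝ (hs u) y e) :=
    (hHs.fderiv_right (m := (⊤ : ℕ∞)) (by simp)).clm_apply contDiff_const
  set H : ℝ → EuclideanSpace ℝ (Fin n) →L[ℝ] EuclideanSpace ℝ (Fin n) →L[ℝ] ℝ := fun t => hs u (x + t • e) with hHdef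
  set H1 : ℝ → EuclideanSpace ℝ (Fin n) →L[ℝ] EuclideanSpace ℝ (Fin n) →L[ℝ] ℝ :=
    fun t => fderiv ℝ (hs u) (x + t • e) e with hH1def
  set H2 : EuclideanSpace ℝ (Fin n) →L[ℝ] EuclideanSpace ℝ (Fin n) →L[ℝ] ℝ :=
    fderiv ℝ (fun y => fderiv ℝ (hs u) y e) (x + (0:ℝ) • e) e with hH2def
  have hH : ∀ t, HasDerivAt H (H1 t) t := fun t => line_curve hHs x e t
  have hH1 : HasDerivAt H1 H2 0 := line_curve hH1s x e 0
  -- the test function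
  set ψ : ℝ → ℝ := fun t => ∑ i, Fc p lam i * H t (U t (b i)) (U t (b i)) with hψ
  set ψ' : ℝ → ℝ := fun t => ∑ i, Fc p lam i * (H1 t (U t (b i)) (U t (b i)) +
    H t (U t (B (b i))) (U t (b i)) + H t (U t (b i)) (U t (B (b i)))) with hψ'
  have d1 : ∀ t, HasDerivAt ψ (ψ' t) t := by
    intro t
    rw [hψ, hψ']
    refine HasDerivAt.fun_sum fun i _ => HasDerivAt.const_mul _ ?_
    exact bil_deriv (hH t) (hU _ t) (hU _ t)
  have d2 : HasDerivAt ψ' (∑ i, Fc p lam i * ((H2 (b i) (b i) + H1 0 (B (b i)) (b i) + H1 0 (b i) (B (b i))) +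
      (H1 0 (B (b i)) (b i) + H 0 (B (B (b i))) (b i) + H 0 (B (b i)) (B (b i))) +
      (H1 0 (b i) (B (b i)) + H 0 (B (b i)) (B (b i)) + H 0 (b i) (B (B (b i)))))) 0 := by
    rw [hψ']
    refine HasDerivAt.fun_sum fun i _ => HasDerivAt.const_mul _ ?_
    have q1 := bil_deriv hH1 (hU (b i) 0) (hU (b i) 0)
    have q2 := bil_deriv (hH 0) (hU (B (b i)) 0) (hU (b i) 0)
    have q3 := bil_deriv (hH 0) (hU (b i) 0) (hU (B (b i)) 0)
    simp only [hU0] at q1 q2 q3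
    exact (q1.add q2).add q3
  have hmin : IsLocalMin ψ 0 := by
    refine Filter.Eventually.of_forall fun t => ?_
    have e0 : ψ 0 = (PSub n p).card := by
      rw [← Fc_lam h.2]
      simp only [hψ, hHdef, hU0, zero_smul, add_zero, h.1, if_true]
    rw [e0]
    obtain ⟨b', mu, h'⟩ := hF (x + t • e)
    have := support h.2 h' (b.map (U t))
    simpa [hψ, hHdef] using this
  obtain ⟨-, hnn⟩ := second_test (Filter.Eventually.of_forall d1) d2 hmin
  -- evaluate
  have hH0 : ∀ i j, H 0 (b i) (b j) = if i = j then lam i else 0 := by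
    intro i j; simp only [hHdef, zero_smul, add_zero]; exact h.1 i j
  have hH1v : ∀ a c, H1 0 a c = D1 (fun y => hs u y a c) e x := by
    intro a c
    rw [eval_fderiv hHs]
    simp [hH1def]
  have hH1Y : ∀ i, H1 0 e (b i) = Y i := by
    intro i
    rw [hH1v, hY]
    simp only
    have : (fun y => hs u y e (b i)) = fun y => hs u y (b i) e := by
      funext y; exact hs_symm hu y _ _
    rw [this, hs_D1_perm hu]
  have hH1sym : ∀ a c, H1 0 a c = H1 0 c a := by
    intro a c
    rw [hH1v, hH1v]
    congr 1
    funext y; exact hs_symm hu y _ _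
  have hH2v : ∀ i, H2 (b i) (b i) = hs (fun y => hs u y e e) x (b i) (b i) := by
    intro i
    rw [hs_hs_comm hu, hs_eq_D1 (smooth_hs2 hu _ _)]
    have : D1 (fun y => hs u y (b i) (b i)) e = fun y => fderiv ℝ (hs u) y e (b i) (b i) := by
      funext y; exact eval_fderiv hHs y e _ _
    rw [this, eval_fderiv hH1s, hH2def]
    simp
  have hH0sym : ∀ a c, H 0 a c = H 0 c a := fun a c => hs_symm hu _ _ _
  have hee : ⟪e, e⟫ = 1 := by rw [he, b.inner_eq_ite]; simp
  have heβ : ⟪e, β⟫ = 0 := by rw [real_inner_comm, he, hin, hbm]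
  have hββ : ⟪β, β⟫ = ∑ i, bc i ^ 2 := by
    conv_lhs => rw [hβ, sum_inner]
    refine Finset.sum_congr rfl fun i _ => ?_
    rw [inner_smul_left, real_inner_comm, ← hβ, hin]
    simp; ring
  have hH0e : ∀ i, H 0 e (b i) = if m = i then lam m else 0 := fun i => hH0 m i
  have hH0βb : ∀ i, H 0 β (b i) = bc i * lam i := by
    intro i
    rw [hβ]
    simp [hH0]
  have hH0ββ : H 0 β β = ∑ i, bc i ^ 2 * lam i := by
    conv_lhs => rw [hH0sym]; arg 2; rw [hβ]
    rw [map_sum]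
    refine Finset.sum_congr rfl fun i _ => ?_
    rw [map_smul, hH0βb]
    simp; ring
  have hH1β : H1 0 β e = ∑ i, bc i * Y i := by
    rw [hH1sym]
    conv_lhs => arg 2; rw [hβ]
    rw [map_sum]
    refine Finset.sum_congr rfl fun i _ => ?_
    rw [map_smul, hH1Y]
    simp
  have hBe : B e = β := by
    rw [hB, hee, real_inner_comm, heβ]; simp
  have hBβ : B β = -(⟪β, β⟫) • e := by
    rw [hB, heβ]; simp
  have hBi : ∀ i, i ≠ m → B (b i) = -(bc i) • e := by
    intro i hi
    rw [hB, hin, he, b.inner_eq_ite, if_neg (Ne.symm hi)]; simp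
  have term : ∀ i, ((H2 (b i) (b i) + H1 0 (B (b i)) (b i) + H1 0 (b i) (B (b i))) +
      (H1 0 (B (b i)) (b i) + H 0 (B (B (b i))) (b i) + H 0 (B (b i)) (B (b i))) +
      (H1 0 (b i) (B (b i)) + H 0 (B (b i)) (B (b i)) + H 0 (b i) (B (B (b i))))) =
      hs (fun y => hs u y e e) x (b i) (b i) + (-4 * bc i * Y i + 2 * bc i ^ 2 * (lam m - lam i)) +
      if i = m then (∑ j, (4 * bc j * Y j - 2 * bc j ^ 2 * (lam m - lam j))) else 0 := by
    intro i
    rw [hH1sym (b i) (B (b i)), hH0sym (b i) (B (B (b i))), hH2v]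
    by_cases hi : i = m
    · rw [if_pos hi, hi, ← he, hBe, hBβ, hH1β, hH0ββ, map_smul, _root_.smul_apply]
      have : H 0 e e = lam m := by rw [he, hH0]; simp
      rw [this, hββ, hbm, Finset.sum_sub_distrib]
      have e1 : ∑ j, 4 * bc j * Y j = 4 * ∑ j, bc j * Y j := by
        rw [Finset.mul_sum]; exact Finset.sum_congr rfl fun j _ => by ring
      have e2 : ∑ j, 2 * bc j ^ 2 * (lam m - lam j) = 2 * lam m * ∑ j, bc j ^ 2 - 2 * ∑ j, bc j ^ 2 * lam j := by
        rw [Finset.mul_sum, Finset.mul_sum, ← Finset.sum_sub_distrib]; exact Finset.sum_congr rfl fun j _ => by ring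
      rw [e1, e2]
      simp only [smul_eq_mul]
      ring
    · rw [if_neg hi, hBi i hi]
      simp only [map_smul, _root_.smul_apply, smul_eq_mul, hBe, hH1Y, hH0βb]
      have : H 0 e e = lam m := by rw [he, hH0]; simp
      rw [this]
      ring
  have hfin : ∑ i, Fc p lam i * (hs (fun y => hs u y e e) x (b i) (b i) + (-4 * bc i * Y i + 2 * bc i ^ 2 * (lam m - lam i)) +
      if i = m then (∑ j, (4 * bc j * Y j - 2 * bc j ^ 2 * (lam m - lam j))) else 0) =
      ∑ i, Fc p lam i * hs (fun y => hs u y e e) x (b i) (b i) -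
      ∑ i, 2 * ((Fc p lam i - Fc p lam m) / (lam m - lam i)) * Y i ^ 2 := by
    simp only [mul_add, Finset.sum_add_distrib, mul_ite, mul_zero, Finset.sum_ite_eq', Finset.mem_univ, if_true]
    rw [add_assoc, add_assoc, sub_eq_add_neg]
    congr 1
    rw [Finset.mul_sum, ← Finset.sum_neg_distrib, ← Finset.sum_add_distrib, ← Finset.sum_add_distrib]
    refine Finset.sum_congr rfl fun i _ => ?_
    simp only [hbc]
    by_cases hz : lam m - lam i = 0
    · simp [hz]
    · field_simp
      ring
  rw [Finset.sum_congr rfl fun i _ => by rw [term i], hfin] at hnn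
  linarith

end rotation

section onevar

lemma grad_1d {q q' q'' : ℝ → ℝ} (hd : ∀ t, HasDerivAt q (q' t) t) (hd2 : ∀ t, HasDerivAt q' (q'' t) t)
    {G L : ℝ} (hG : 0 < G) (hL : 0 < L) (h0 : q' 0 = -G) (hb : ∀ t, q t ≤ q 0 → q'' t ≤ L * G) :
    q (1 / L) ≤ q 0 - G / (2 * L) := by
  have hL1 : 0 < 1 / L := by positivity
  have hq : Continuous q := continuous_iff_continuousAt.2 fun t => (hd t).continuousAt
  have hq' : Continuous q' := continuous_iff_continuousAt.2 fun t => (hd2 t).continuousAt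
  -- propagation
  have prop : ∀ τ, 0 ≤ τ → (∀ t, 0 ≤ t → t < τ → q' t < 0) → q' τ ≤ -G + L * G * τ := by
    intro τ hτ hneg
    have h1 : AntitoneOn q (Set.Icc 0 τ) := by
      refine antitoneOn_of_deriv_nonpos (convex_Icc 0 τ) hq.continuousOn
        (fun t _ => (hd t).differentiableAt.differentiableWithinAt) ?_
      intro t ht
      rw [interior_Icc] at ht
      rw [(hd t).deriv]
      exact (hneg t ht.1.le ht.2).le
    have h2 : AntitoneOn (fun t => q' t - L * G * t) (Set.Icc 0 τ) := by
      have hdd : ∀ t, HasDerivAt (fun t => q' t - L * G * t) (q'' t - L * G) t := by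
        intro t
        exact HasDerivAt.congr_deriv (show HasDerivAt (fun t => q' t - L * G * t) _ t from (hd2 t).sub ((hasDerivAt_id t).const_mul (L * G))) (by simp)
      refine antitoneOn_of_deriv_nonpos (convex_Icc 0 τ) (by fun_prop)
        (fun t _ => (hdd t).differentiableAt.differentiableWithinAt) ?_
      intro t ht
      rw [interior_Icc] at ht
      rw [(hdd t).deriv]
      have := hb t (h1 ⟨le_rfl, hτ⟩ ⟨ht.1.le, ht.2.le⟩ ht.1.le)
      linarith
    have := h2 ⟨le_rfl, hτ⟩ ⟨hτ, le_rfl⟩ hτ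
    simp only at this
    rw [h0] at this
    linarith
  have hneg : ∀ t, 0 ≤ t → t < 1 / L → q' t < 0 := by
    by_contra! hcon
    obtain ⟨t, ht0, ht1, ht2⟩ := hcon
    have hc : IsCompact (Set.Icc 0 t ∩ {s | 0 ≤ q' s}) :=
      isCompact_Icc.inter_right (isClosed_le continuous_const hq')
    obtain ⟨τ, hτ, hmin⟩ := hc.exists_isLeast ⟨t, ⟨ht0, le_rfl⟩, ht2⟩
    have h1 := prop τ hτ.1.1 ?_
    · have h2 : 0 ≤ q' τ := hτ.2
      have h3 : τ < 1 / L := lt_of_le_of_lt hτ.1.2 ht1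
      have h4 : L * τ < 1 := by
        rw [lt_div_iff₀ hL] at h3; linarith
      nlinarith
    · intro s hs0 hs1
      by_contra! hs
      have := hmin ⟨⟨hs0, hs1.le.trans hτ.1.2⟩, hs⟩
      linarith
  have h2 : AntitoneOn (fun t => q t + G * t - L * G / 2 * t ^ 2) (Set.Icc 0 (1 / L)) := by
    have hdd : ∀ t, HasDerivAt (fun t => q t + G * t - L * G / 2 * t ^ 2) (q' t + G - L * G * t) t := by
      intro t
      have := ((hd t).add ((hasDerivAt_id t).const_mul G)).sub (((hasDerivAt_id t).pow 2).const_mul (L * G / 2))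
      refine HasDerivAt.congr_deriv (show HasDerivAt (fun t => q t + G * t - L * G / 2 * t ^ 2) _ t from this) ?_
      simp
      ring
    refine antitoneOn_of_deriv_nonpos (convex_Icc 0 _) (by fun_prop)
      (fun t _ => (hdd t).differentiableAt.differentiableWithinAt) ?_
    intro t ht
    rw [interior_Icc] at ht
    rw [(hdd t).deriv]
    have := prop t ht.1.le fun s hs0 hs1 => hneg s hs0 (hs1.trans ht.2)
    linarith
  have := h2 ⟨le_rfl, hL1.le⟩ ⟨hL1.le, le_rfl⟩ hL1.le
  simp only at this
  have e1 : G * (1 / L) - L * G / 2 * (1 / L) ^ 2 = G / (2 * L) := by field_simp; ring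
  have e2 : q 0 + G * 0 - L * G / 2 * 0 ^ 2 = q 0 := by ring
  rw [e2] at this
  linarith

lemma log_test {v v' g g' : ℝ → ℝ} {v2 g2 : ℝ} (hv : ∀ t, HasDerivAt v (v' t) t)
    (hv2 : HasDerivAt v' v2 0) (hg : ∀ t, HasDerivAt g (g' t) t) (hg2 : HasDerivAt g' g2 0)
    (hv0 : 0 < v 0) (hg0 : 0 < g 0) (β : ℕ) (k c ξ : ℝ)
    (hmax : IsLocalMax (fun t => v t ^ β * Real.exp (k / 2 * (t ^ 2 + 2 * t * ξ + c)) * g t) 0) :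
    β * (v' 0 / v 0) + g' 0 / g 0 + k * ξ = 0 ∧
    β * (v2 / v 0 - (v' 0 / v 0) ^ 2) + (g2 / g 0 - (g' 0 / g 0) ^ 2) + k ≤ 0 := by
  have evv : ∀ᶠ t in nhds (0:ℝ), 0 < v t := (hv 0).continuousAt.eventually (lt_mem_nhds hv0)
  have evg : ∀ᶠ t in nhds (0:ℝ), 0 < g t := (hg 0).continuousAt.eventually (lt_mem_nhds hg0)
  set φ : ℝ → ℝ := fun t => -(β * Real.log (v t) + Real.log (g t) + k / 2 * (t ^ 2 + 2 * t * ξ + c)) with hφ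
  set φ' : ℝ → ℝ := fun t => -(β * (v' t / v t) + g' t / g t + k * (t + ξ)) with hφ'
  have h1 : ∀ᶠ t in nhds (0:ℝ), HasDerivAt φ (φ' t) t := by
    filter_upwards [evv, evg] with t h1 h2
    have q : HasDerivAt (fun t : ℝ => k / 2 * (t ^ 2 + 2 * t * ξ + c)) (k * (t + ξ)) t := by
      have := ((((hasDerivAt_id t).pow 2).add (((hasDerivAt_id t).const_mul 2).mul_const ξ)).add_const c).const_mul (k / 2)
      refine HasDerivAt.congr_deriv (show HasDerivAt (fun t : ℝ => k / 2 * (t ^ 2 + 2 * t * ξ + c)) _ t from this) ?_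
      simp
      ring
    exact ((((hv t).log h1.ne').const_mul (β : ℝ)).add ((hg t).log h2.ne')).add q |>.neg
  have h2 : HasDerivAt φ' (-(β * (v2 / v 0 - (v' 0 / v 0) ^ 2) + (g2 / g 0 - (g' 0 / g 0) ^ 2) + k)) 0 := by
    have q : HasDerivAt (fun t : ℝ => k * (t + ξ)) k 0 := by
      simpa using ((hasDerivAt_id (0:ℝ)).add_const ξ).const_mul k
    have := ((((hv2.div (hv 0) hv0.ne').const_mul (β : ℝ)).add (hg2.div (hg 0) hg0.ne')).add q).neg
    refine HasDerivAt.congr_deriv (show HasDerivAt φ' _ 0 from this) ?_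
    field_simp
  have hmin : IsLocalMin φ 0 := by
    filter_upwards [hmax, evv, evg] with t h3 h4 h5
    have hl : ∀ s, 0 < v s → 0 < g s → φ s = -Real.log (v s ^ β * Real.exp (k / 2 * (s ^ 2 + 2 * s * ξ + c)) * g s) := by
      intro s hs1 hs2
      rw [Real.log_mul (by positivity) hs2.ne', Real.log_mul (by positivity) (by positivity), Real.log_exp, Real.log_pow]
      simp only [hφ]
      ring
    rw [hl t h4 h5, hl 0 hv0 hg0, neg_le_neg_iff]
    exact Real.log_le_log (by positivity) h3
  obtain ⟨e1, e2⟩ := second_test h1 h2 hmin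
  simp only [hφ', zero_add] at e1
  exact ⟨by linarith, by linarith⟩

end onevar

section pogorelov
open scoped RealInnerProductSpace
variable {n p : ℕ} {u : EuclideanSpace ℝ (Fin n) → ℝ}

lemma exp_half_le : Real.exp (1 / 2) ≤ 2 := by
  have h1 : Real.exp (1 / 2) ^ 2 = Real.exp 1 := by rw [← Real.exp_nat_mul]; norm_num
  have h2 := Real.exp_one_lt_d9
  nlinarith [Real.exp_pos (1 / 2)]

/-- gradient estimate at the maximum point -/
lemma pog_grad (hu : ContDiff ℝ (⊤ : ℕ∞) u) {C h k L : ℝ} (β : ℕ) (hC : 0 < C) (hCh : C ≤ h)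
    (hlow : ∀ x, -C ≤ u x) (hk0 : 0 ≤ k) (hk : ∀ x, u x ≤ h → k * ‖x‖ ^ 2 ≤ 1)
    {x0 : EuclideanSpace ℝ (Fin n)} (hv : u x0 < h) (hL : 0 < L)
    (hmax : ∀ x, u x ≤ h → ∀ e, ‖e‖ = 1 → (h - u x) ^ β * Real.exp (k / 2 * ‖x‖ ^ 2) * hs u x e e ≤
      (h - u x0) ^ β * Real.exp (k / 2 * ‖x0‖ ^ 2) * L)
    (b : OrthonormalBasis (Fin n) ℝ (EuclideanSpace ℝ (Fin n))) :
    ∑ i, (D1 u (b i) x0) ^ 2 ≤ 8 * L * h := by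
  have hv0 : 0 < h - u x0 := by linarith
  have hbd : ∀ x, u x ≤ u x0 → ∀ e, ‖e‖ = 1 → hs u x e e ≤ 2 * L := by
    intro x hx e he
    have h1 := hmax x (by linarith) e he
    by_contra! hcon
    have hpos : 0 < hs u x e e := by linarith
    have h2 : (h - u x0) ^ β ≤ (h - u x) ^ β := pow_le_pow_left₀ hv0.le (by linarith) β
    have h3 : (1:ℝ) ≤ Real.exp (k / 2 * ‖x‖ ^ 2) := Real.one_le_exp (by positivity)
    have h4 : Real.exp (k / 2 * ‖x0‖ ^ 2) ≤ 2 := by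
      refine le_trans (Real.exp_le_exp.2 ?_) exp_half_le
      have := hk x0 hv.le
      linarith
    have h5 : (h - u x0) ^ β * 1 * hs u x e e ≤ (h - u x) ^ β * Real.exp (k / 2 * ‖x‖ ^ 2) * hs u x e e := by
      gcongr
      exact pow_nonneg (by linarith) β
    have h6 : (h - u x0) ^ β * Real.exp (k / 2 * ‖x0‖ ^ 2) * L ≤ (h - u x0) ^ β * 2 * L := by
      gcongr
    have h7 : 0 < (h - u x0) ^ β := by positivity
    nlinarith
  set g : EuclideanSpace ℝ (Fin n) := ∑ i, D1 u (b i) x0 • b i with hg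
  set G := ∑ i, (D1 u (b i) x0) ^ 2 with hG
  have hDg : D1 u g x0 = G := by
    unfold D1
    rw [hg, map_sum, hG]
    refine Finset.sum_congr rfl fun i _ => ?_
    rw [map_smul, smul_eq_mul, D1]; ring
  have hng : ‖g‖ ^ 2 = G := by
    rw [← b.sum_sq_norm_inner_right g, hG]
    refine Finset.sum_congr rfl fun i _ => ?_
    have : ⟪b i, g⟫ = D1 u (b i) x0 := by
      rw [hg, inner_sum]
      simp [inner_smul_right, b.inner_eq_ite]
    rw [this]; simp
  have hG0 : 0 ≤ G := Finset.sum_nonneg fun i _ => sq_nonneg _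
  have hLh : 0 ≤ 8 * L * h := by
    have : 0 < h := by linarith
    positivity
  rcases eq_or_lt_of_le hG0 with h0 | hpos
  · rw [← h0]; exact hLh
  have hgpos : 0 < ‖g‖ := by
    rcases eq_or_lt_of_le (norm_nonneg g) with h1 | h1
    · rw [← h1] at hng; norm_num at hng; linarith
    · exact h1
  have key := grad_1d (q := fun t : ℝ => u (x0 + t • (-g))) (q' := fun t => D1 u (-g) (x0 + t • (-g)))
    (q'' := fun t => hs u (x0 + t • (-g)) (-g) (-g)) (fun t => line_deriv hu x0 (-g) t)
    (fun t => line_deriv2 hu x0 (-g) t) hpos (L := 2 * L) (by positivity) ?_ ?_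
  · have h1 := hlow (x0 + (1 / (2 * L)) • (-g))
    simp only [zero_smul, add_zero] at key
    have h2 : G / (2 * (2 * L)) ≤ 2 * h := by linarith
    rw [div_le_iff₀ (by positivity)] at h2
    linarith
  · simp only [zero_smul, add_zero]
    rw [← hDg]; simp [D1]
  · intro t ht
    simp only [zero_smul, add_zero] at ht
    have h1 := hbd _ ht (‖g‖⁻¹ • g) (by rw [norm_smul]; simp [hgpos.ne'])
    simp only [map_smul, _root_.smul_apply, smul_eq_mul] at h1
    simp only [map_neg, _root_.neg_apply, neg_neg]
    rw [← hng]
    have h2 : ‖g‖⁻¹ * (‖g‖⁻¹ * hs u (x0 + t • -g) g g) = hs u (x0 + t • -g) g g / ‖g‖ ^ 2 := by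
      field_simp
    rw [h2, div_le_iff₀ (by positivity)] at h1
    exact h1

/-- maximum principle computation at the maximum point -/
lemma pog_max (hu : ContDiff ℝ (⊤ : ℕ∞) u) (hF : ∀ x, ∃ b lam, Frame p u x b lam) (hp : 2 ≤ p)
    {h k : ℝ} (β : ℕ) (hβ : 6 ≤ β) (hk0 : 0 ≤ k) (hk : ∀ x, u x ≤ h → k * ‖x‖ ^ 2 ≤ 1)
    {x0 : EuclideanSpace ℝ (Fin n)} (hv : u x0 < h)
    {b : OrthonormalBasis (Fin n) ℝ (EuclideanSpace ℝ (Fin n))} {lam : Fin n → ℝ}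
    (hfr : Frame p u x0 b lam) {m : Fin n} (hm : ∀ i, lam i ≤ lam m) (hm0 : 0 < lam m)
    (hmax : ∀ x, u x ≤ h → ∀ e, ‖e‖ = 1 → (h - u x) ^ β * Real.exp (k / 2 * ‖x‖ ^ 2) * hs u x e e ≤
      (h - u x0) ^ β * Real.exp (k / 2 * ‖x0‖ ^ 2) * lam m) :
    2 * k / 3 * (p * Ts p lam) ≤ β * (PSub n p).card / (h - u x0) +
      4 / 3 * ((2 * p * (PSub n p).card) / lam m) *
        (2 * β ^ 2 * (∑ i, (D1 u (b i) x0) ^ 2) / (h - u x0) ^ 2 + 2 * k) := by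
  have hv0 : 0 < h - u x0 := by linarith
  have hβ' : (6:ℝ) ≤ β := by exact_mod_cast hβ
  set w : EuclideanSpace ℝ (Fin n) → ℝ := fun y => hs u y (b m) (b m) with hw
  have hws : ContDiff ℝ (⊤ : ℕ∞) w := smooth_hs2 hu _ _
  have hwx : w x0 = lam m := by simp [hw, hfr.1]
  set D : Fin n → ℝ := fun i => D1 u (b i) x0 / (h - u x0) with hD
  set y : Fin n → ℝ := fun i => D1 w (b i) x0 / lam m with hy
  set ξ : Fin n → ℝ := fun i => ⟪b i, x0⟫ with hξ
  have test : ∀ i, y i = β * D i - k * ξ i ∧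
      β * (-lam i / (h - u x0) - D i ^ 2) + (hs w x0 (b i) (b i) / lam m - y i ^ 2) + k ≤ 0 := by
    intro i
    have hc : Continuous (fun t : ℝ => x0 + t • b i) := by fun_prop
    have hcu : Continuous (fun t : ℝ => u (x0 + t • b i)) := hu.continuous.comp hc
    have := log_test (v := fun t : ℝ => h - u (x0 + t • b i)) (v' := fun t => - D1 u (b i) (x0 + t • b i))
      (g := fun t => w (x0 + t • b i)) (g' := fun t => D1 w (b i) (x0 + t • b i))
      (v2 := - hs u (x0 + (0:ℝ) • b i) (b i) (b i)) (g2 := hs w (x0 + (0:ℝ) • b i) (b i) (b i))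
      (fun t => (line_deriv hu x0 (b i) t).const_sub h) (line_deriv2 hu x0 (b i) 0).neg
      (fun t => line_deriv hws x0 (b i) t) (line_deriv2 hws x0 (b i) 0)
      (by simpa using hv) (by simpa [hwx] using hm0) β k (‖x0‖ ^ 2) (ξ i) ?_
    · simp only [zero_smul, add_zero, hwx, hfr.1, if_true] at this
      obtain ⟨h1, h2⟩ := this
      refine ⟨?_, ?_⟩
      · simp only [hy, hD]
        rw [neg_div] at h1
        linarith
      · simp only [hy, hD]
        rw [neg_div (h - u x0) (D1 u (b i) x0), neg_sq] at h2
        exact h2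
    · have hev : ∀ᶠ t in nhds (0:ℝ), u (x0 + t • b i) < h :=
        hcu.continuousAt.eventually (gt_mem_nhds (by simpa using hv))
      filter_upwards [hev] with t ht
      have h1 := hmax (x0 + t • b i) ht.le (b m) (b.norm_eq_one m)
      have hnorm : ∀ t : ℝ, ‖x0 + t • b i‖ ^ 2 = t ^ 2 + 2 * t * ξ i + ‖x0‖ ^ 2 := by
        intro t
        rw [norm_add_sq_real, inner_smul_right, norm_smul, b.norm_eq_one, real_inner_comm]
        simp [hξ]
        ring
      rw [hnorm t, ← hwx] at h1
      simpa using h1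
  have hadm := hfr.2
  have hf0 := fun i => Fc_nonneg hadm i
  set K : ℝ := 2 * p * (PSub n p).card with hK
  have hK0 : 0 ≤ K := by positivity
  -- rotation and key algebra
  have hrot : ∑ i, 4 / 3 * (Fc p lam i - K / lam m) * y i ^ 2 ≤ ∑ i, Fc p lam i * (hs w x0 (b i) (b i) / lam m) := by
    have h1 := rot_ineq hu hF hfr m
    have h2 : ∑ i, Fc p lam i * (hs w x0 (b i) (b i) / lam m) = (∑ i, Fc p lam i * hs w x0 (b i) (b i)) / lam m := by
      rw [Finset.sum_div]; exact Finset.sum_congr rfl fun i _ => by ring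
    rw [h2, le_div_iff₀ hm0]
    refine le_trans ?_ h1
    rw [Finset.sum_mul]
    refine Finset.sum_le_sum fun i _ => ?_
    have h3 := key_alg hp hadm hm hm0 i
    have h4 : D1 (fun y => hs u y (b m) (b m)) (b i) x0 = y i * lam m := by
      simp only [hy, hw]; field_simp
    rw [h4]
    have h5 : 0 ≤ y i ^ 2 * lam m := by positivity
    have := mul_le_mul_of_nonneg_right h3 h5
    calc _ = 4 / 3 * (Fc p lam i - K / lam m) * (y i ^ 2 * lam m) := by ring
      _ ≤ _ := this
      _ = _ := by ring
  have hx1 := hk x0 hv.le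
  have hξ1 : ∑ i, ξ i ^ 2 = ‖x0‖ ^ 2 := by
    rw [← b.sum_sq_norm_inner_right x0]
    exact Finset.sum_congr rfl fun i _ => by simp [hξ]
  have hξi : ∀ i, ξ i ^ 2 ≤ ‖x0‖ ^ 2 := by
    intro i
    rw [← hξ1]
    exact Finset.single_le_sum (f := fun i => ξ i ^ 2) (fun j _ => sq_nonneg _) (Finset.mem_univ i)
  -- pointwise
  have hpt : ∀ i, Fc p lam i * (2 * k / 3) ≤ β / (h - u x0) * (Fc p lam i * lam i) -
      (Fc p lam i * (hs w x0 (b i) (b i) / lam m) - 4 / 3 * (Fc p lam i - K / lam m) * y i ^ 2)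
      + 4 / 3 * (K / lam m) * y i ^ 2 := by
    intro i
    obtain ⟨h1, h2⟩ := test i
    have h3 := mul_le_mul_of_nonneg_left h2 (hf0 i)
    have h4 : β * D i ^ 2 ≤ 1 / 3 * y i ^ 2 + k / 3 := by
      have e1 : (β:ℝ) * D i = y i + k * ξ i := by linarith
      have e2 : (β * D i) ^ 2 ≤ 2 * y i ^ 2 + 2 * (k * ξ i) ^ 2 := by
        rw [e1]; nlinarith [sq_nonneg (y i - k * ξ i)]
      have e3 : (k * ξ i) ^ 2 ≤ k := by
        have : k * ξ i ^ 2 ≤ 1 := le_trans (mul_le_mul_of_nonneg_left (hξi i) hk0) hx1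
        nlinarith
      have e4 : 6 * (β * D i ^ 2) ≤ (β * D i) ^ 2 := by
        have : 0 ≤ (β:ℝ) * D i ^ 2 := by positivity
        nlinarith
      linarith
    have h5 := mul_le_mul_of_nonneg_left h4 (hf0 i)
    have e5 : Fc p lam i * (β * (-lam i / (h - u x0) - D i ^ 2) + (hs w x0 (b i) (b i) / lam m - y i ^ 2) + k) =
       -(β / (h - u x0) * (Fc p lam i * lam i)) - Fc p lam i * (β * D i ^ 2) + Fc p lam i * (hs w x0 (b i) (b i) / lam m)
        - Fc p lam i * y i ^ 2 + Fc p lam i * k := by ring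
    rw [e5, mul_zero] at h3
    nlinarith
  have hsum := Finset.sum_le_sum fun i (_ : i ∈ Finset.univ) => hpt i
  rw [← Finset.sum_mul, Fc_total, Finset.sum_add_distrib, Finset.sum_sub_distrib, ← Finset.mul_sum, Fc_lam hadm,
    Finset.sum_sub_distrib, ← Finset.mul_sum] at hsum
  have hysum : ∑ i, y i ^ 2 ≤ 2 * β ^ 2 * (∑ i, (D1 u (b i) x0) ^ 2) / (h - u x0) ^ 2 + 2 * k := by
    have e1 : ∑ i, y i ^ 2 ≤ ∑ i, (2 * β ^ 2 / (h - u x0) ^ 2 * (D1 u (b i) x0) ^ 2 + 2 * k ^ 2 * ξ i ^ 2) := by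
      refine Finset.sum_le_sum fun i _ => ?_
      rw [(test i).1]
      have : 2 * β ^ 2 / (h - u x0) ^ 2 * (D1 u (b i) x0) ^ 2 = 2 * (β * D i) ^ 2 := by
        simp only [hD]; field_simp
      rw [this]
      nlinarith [sq_nonneg (β * D i + k * ξ i)]
    rw [Finset.sum_add_distrib, ← Finset.mul_sum, ← Finset.mul_sum, hξ1] at e1
    have e2 : 2 * k ^ 2 * ‖x0‖ ^ 2 ≤ 2 * k := by nlinarith
    have e3 : 2 * β ^ 2 / (h - u x0) ^ 2 * (∑ i, (D1 u (b i) x0) ^ 2) = 2 * β ^ 2 * (∑ i, (D1 u (b i) x0) ^ 2) / (h - u x0) ^ 2 := by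
      ring
    linarith
  have hKl : 0 ≤ 4 / 3 * (K / lam m) := by positivity
  have hfin := mul_le_mul_of_nonneg_left hysum hKl
  calc 2 * k / 3 * (p * Ts p lam) = p * Ts p lam * (2 * k / 3) := by ring
    _ ≤ _ := hsum
    _ ≤ _ := by
      have : (β:ℝ) * (PSub n p).card / (h - u x0) = β / (h - u x0) * (PSub n p).card := by ring
      rw [this]
      linarith

end pogorelov

section pogbound
open scoped RealInnerProductSpace
variable {n p : ℕ} {u : EuclideanSpace ℝ (Fin n) → ℝ}

lemma pog_num {C h v L G T pp N β : ℝ} (hC : 0 < C) (hh : 0 < h) (hv : 0 < v) (hvh : v ≤ 2 * h)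
    (hL : 1 ≤ L) (hG : G ≤ 8 * L * h) (hT : 0 ≤ T) (hp : 1 ≤ pp) (hN : 0 ≤ N) (hβ : 0 ≤ β)
    (H : 2 * (1 / (2 * C * h)) / 3 * (pp * T) ≤ β * N / v +
      4 / 3 * ((2 * pp * N) / L) * (2 * β ^ 2 * G / v ^ 2 + 2 * (1 / (2 * C * h)))) :
    T ≤ (3 * C * (2 * β * N + 16 * (8 * pp * N / 3) * β ^ 2) + 12 * (8 * pp * N / 3)) * (h / v) ^ 2 := by
  set K := 8 * pp * N / 3 with hK
  have hK0 : 0 ≤ K := by positivity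
  set r := h / v with hr
  have hL0 : 0 < L := by linarith
  have hr2 : 1 / 2 ≤ r := by rw [hr, le_div_iff₀ hv]; linarith
  have e1 : 2 * (1 / (2 * C * h)) / 3 * (pp * T) = pp * T / (3 * C * h) := by field_simp
  have e2 : β * N / v = β * N * r / h := by rw [hr]; field_simp
  have e3 : 4 / 3 * ((2 * pp * N) / L) * (2 * β ^ 2 * G / v ^ 2 + 2 * (1 / (2 * C * h)))
      = (2 * K * β ^ 2 * (G / (L * h)) * r ^ 2 + K / (C * L)) / h := by
    rw [hr, hK]; field_simp
    try ring
  rw [e1, e2, e3] at H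
  have hGL : G / (L * h) ≤ 8 := by rw [div_le_iff₀ (by positivity)]; linarith
  have h1 : pp * T / (3 * C) ≤ β * N * r + (2 * K * β ^ 2 * (G / (L * h)) * r ^ 2 + K / (C * L)) := by
    have := mul_le_mul_of_nonneg_right H hh.le
    rw [add_mul, div_mul_cancel₀ _ hh.ne', div_mul_cancel₀ _ hh.ne'] at this
    refine le_trans (le_of_eq ?_) this
    field_simp
  have h2 : 2 * K * β ^ 2 * (G / (L * h)) * r ^ 2 ≤ 2 * K * β ^ 2 * 8 * r ^ 2 := by gcongr
  have h3 : K / (C * L) ≤ K / C := by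
    apply div_le_div_of_nonneg_left hK0 hC
    nlinarith
  have h4 : T ≤ pp * T := by nlinarith
  have h5 : r ≤ 2 * r ^ 2 := by nlinarith
  have h6 : 1 ≤ 4 * r ^ 2 := by nlinarith
  have h7 : pp * T ≤ 3 * C * (β * N * r + (2 * K * β ^ 2 * 8 * r ^ 2 + K / C)) := by
    rw [div_le_iff₀ (by positivity)] at h1
    nlinarith
  have h8 : 3 * C * (β * N * r + (2 * K * β ^ 2 * 8 * r ^ 2 + K / C))
    = 3 * C * (β * N) * r + 3 * C * (2 * K * β ^ 2 * 8) * r ^ 2 + 3 * K := by field_simp; ring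
  have h9 : 3 * C * (β * N) * r ≤ 3 * C * (β * N) * (2 * r ^ 2) := by gcongr
  have h10 : 3 * K * 1 ≤ 3 * K * (4 * r ^ 2) := by gcongr
  linarith

lemma pog_level (hu : ContDiff ℝ (⊤ : ℕ∞) u) (hF : ∀ x, ∃ b lam, Frame p u x b lam) (hp : 2 ≤ p)
    (hpn : p ≤ n) {C : ℝ} (hC : 0 < C) (hgr : ∀ x, C⁻¹ * ‖x‖ ^ 2 - C ≤ u x) :
    ∃ (C0 : ℝ) (β : ℕ), 0 < C0 ∧ ∀ h, C ≤ h → ∀ x, u x ≤ h → ∀ e, ‖e‖ = 1 →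
      ((h - u x) / h) ^ β * hs u x e e ≤ C0 := by
  set N := (PSub n p).card with hN
  obtain ⟨β, hβ⟩ : ∃ β : ℕ, β = 2 * (N - 1) + 6 := ⟨_, rfl⟩
  set C1 : ℝ := 3 * C * (2 * β * N + 16 * (8 * p * N / 3) * β ^ 2) + 12 * (8 * p * N / 3) with hC1
  have hC10 : 0 ≤ C1 := by positivity
  refine ⟨2 * (64 * C1 ^ (N - 1) + 2 ^ β), β, by positivity, ?_⟩
  intro h hCh x hx e he
  have hh : 0 < h := by linarith
  set k : ℝ := 1 / (2 * C * h) with hkdef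
  have hk0 : 0 ≤ k := by positivity
  have hlow : ∀ x, -C ≤ u x := fun x => by
    have := hgr x
    have : 0 ≤ C⁻¹ * ‖x‖ ^ 2 := by positivity
    linarith
  have hnorm : ∀ x, u x ≤ h → ‖x‖ ^ 2 ≤ 2 * C * h := by
    intro x hx
    have h1 : C⁻¹ * ‖x‖ ^ 2 ≤ 2 * h := by linarith [hgr x]
    rw [inv_mul_le_iff₀ hC] at h1
    linarith
  have hk : ∀ x, u x ≤ h → k * ‖x‖ ^ 2 ≤ 1 := by
    intro x hx
    rw [hkdef, one_div, inv_mul_le_iff₀ (by positivity), mul_one]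
    exact hnorm x hx
  -- compactness
  set Kset : Set (EuclideanSpace ℝ (Fin n) × EuclideanSpace ℝ (Fin n)) :=
    {x | u x ≤ h} ×ˢ Metric.sphere 0 1 with hKset
  have hcomp : IsCompact Kset := by
    refine IsCompact.prod ?_ (isCompact_sphere _ _)
    refine Metric.isCompact_of_isClosed_isBounded (isClosed_le hu.continuous continuous_const) ?_
    refine (Metric.isBounded_closedBall (x := (0 : EuclideanSpace ℝ (Fin n)))
      (r := Real.sqrt (2 * C * h))).subset ?_
    intro y hy
    rw [mem_closedBall_zero_iff]
    exact Real.le_sqrt_of_sq_le (hnorm y hy)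
  have hcont : Continuous fun q : EuclideanSpace ℝ (Fin n) × EuclideanSpace ℝ (Fin n) =>
      (h - u q.1) ^ β * Real.exp (k / 2 * ‖q.1‖ ^ 2) * hs u q.1 q.2 q.2 := by
    have h1 : Continuous fun q : EuclideanSpace ℝ (Fin n) × EuclideanSpace ℝ (Fin n) => hs u q.1 :=
      (smooth_hs hu).continuous.comp continuous_fst
    have h2 := (h1.clm_apply continuous_snd).clm_apply continuous_snd
    have h3 := hu.continuous
    fun_prop
  obtain ⟨⟨x0, e0⟩, hq, hqmax⟩ := hcomp.exists_isMaxOn ⟨(x, e), hx, by simpa using he⟩ hcont.continuousOn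
  have hx0 : u x0 ≤ h := hq.1
  have he0 : ‖e0‖ = 1 := by simpa using hq.2
  have hmax0 : ∀ y, u y ≤ h → ∀ e, ‖e‖ = 1 → (h - u y) ^ β * Real.exp (k / 2 * ‖y‖ ^ 2) * hs u y e e ≤
      (h - u x0) ^ β * Real.exp (k / 2 * ‖x0‖ ^ 2) * hs u x0 e0 e0 := by
    intro y hy e he
    exact hqmax (show (y, e) ∈ Kset from ⟨hy, by simpa using he⟩)
  have hv0 : 0 ≤ h - u x := by linarith
  have hCpos : (0:ℝ) < 2 * (64 * C1 ^ (N - 1) + 2 ^ β) := by positivity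
  have hxe := hmax0 x hx e he
  have hexp1 : (1:ℝ) ≤ Real.exp (k / 2 * ‖x‖ ^ 2) := Real.one_le_exp (by positivity)
  by_cases hneg : hs u x e e ≤ 0
  · refine le_trans ?_ hCpos.le
    exact mul_nonpos_of_nonneg_of_nonpos (by positivity) hneg
  push Not at hneg
  rcases eq_or_lt_of_le hv0 with hvz | hvpos
  · rw [← hvz]
    have : β ≠ 0 := by omega
    simp only [zero_div, zero_pow this, zero_mul]
    exact hCpos.le
  have hΦ : 0 < (h - u x0) ^ β * Real.exp (k / 2 * ‖x0‖ ^ 2) * hs u x0 e0 e0 :=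
    lt_of_lt_of_le (by positivity) hxe
  have hv : u x0 < h := by
    refine lt_of_le_of_ne hx0 fun hcon => ?_
    have : β ≠ 0 := by omega
    rw [hcon] at hΦ
    simp [zero_pow this] at hΦ
  have hw0 : 0 < h - u x0 := by linarith
  obtain ⟨b, lam, hfr⟩ := hF x0
  have hn : 0 < n := by omega
  have : Nonempty (Fin n) := ⟨⟨0, hn⟩⟩
  obtain ⟨m, hm⟩ := Finite.exists_max lam
  have hle : hs u x0 e0 e0 ≤ lam m := by
    rw [hs_frame hfr]
    calc ∑ i, ⟪b i, e0⟫ * ⟪b i, e0⟫ * lam i ≤ ∑ i, ⟪b i, e0⟫ * ⟪b i, e0⟫ * lam m :=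
          Finset.sum_le_sum fun i _ => mul_le_mul_of_nonneg_left (hm i) (mul_self_nonneg _)
      _ = lam m := by
          rw [← Finset.sum_mul]
          have := b.sum_sq_norm_inner_right e0
          rw [he0, one_pow] at this
          have h2 : ∑ i, ⟪b i, e0⟫ * ⟪b i, e0⟫ = 1 := by
            rw [← this]
            refine Finset.sum_congr rfl fun i _ => ?_
            rw [Real.norm_eq_abs, sq_abs]; ring
          rw [h2, one_mul]
  have hs0 : 0 < hs u x0 e0 e0 := by
    by_contra! hcon
    have : (h - u x0) ^ β * Real.exp (k / 2 * ‖x0‖ ^ 2) * hs u x0 e0 e0 ≤ 0 :=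
      mul_nonpos_of_nonneg_of_nonpos (by positivity) hcon
    linarith
  have hm0 : 0 < lam m := by linarith
  have hmax : ∀ y, u y ≤ h → ∀ e, ‖e‖ = 1 → (h - u y) ^ β * Real.exp (k / 2 * ‖y‖ ^ 2) * hs u y e e ≤
      (h - u x0) ^ β * Real.exp (k / 2 * ‖x0‖ ^ 2) * lam m := by
    intro y hy e he
    refine (hmax0 y hy e he).trans ?_
    gcongr
  have hG := pog_grad hu β hC hCh hlow hk0 hk hv hm0 hmax b
  have hP := pog_max hu hF hp β (by omega) hk0 hk hv hfr hm hm0 hmax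
  have hv2 : h - u x0 ≤ 2 * h := by linarith [hlow x0]
  have hratio : (h - u x0) / h ≤ 2 := by rw [div_le_iff₀ hh]; exact hv2
  have hmain : ((h - u x0) / h) ^ β * lam m ≤ 64 * C1 ^ (N - 1) + 2 ^ β := by
    by_cases hl : lam m ≤ 1
    · have h1 : ((h - u x0) / h) ^ β ≤ 2 ^ β := pow_le_pow_left₀ (by positivity) hratio β
      have h2 : ((h - u x0) / h) ^ β * lam m ≤ 2 ^ β * 1 := by gcongr
      have : 0 ≤ 64 * C1 ^ (N - 1) := by positivity
      linarith
    · push Not at hl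
      have hT := pog_num (N := (N:ℝ)) (β := (β:ℝ)) (pp := (p:ℝ)) hC hh hw0 hv2 hl.le hG (Ts_nonneg hfr.2)
        (by exact_mod_cast (by omega : 1 ≤ p)) (by positivity) (by positivity) hP
      rw [← hC1] at hT
      have h1 : lam m ≤ (C1 * (h / (h - u x0)) ^ 2) ^ (N - 1) :=
        (lam_le_Ts hp hpn hfr.2 m).trans (pow_le_pow_left₀ (Ts_nonneg hfr.2) hT _)
      have h2 : ((h - u x0) / h) ^ β * lam m ≤
          ((h - u x0) / h) ^ β * (C1 * (h / (h - u x0)) ^ 2) ^ (N - 1) := by gcongr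
      have h3 : ((h - u x0) / h) ^ β * (C1 * (h / (h - u x0)) ^ 2) ^ (N - 1)
          = ((h - u x0) / h) ^ 6 * C1 ^ (N - 1) := by
        rw [hβ, pow_add, pow_mul, mul_pow]
        have : (((h - u x0) / h) ^ 2) ^ (N - 1) * ((h / (h - u x0)) ^ 2) ^ (N - 1) = 1 := by
          rw [← mul_pow, ← mul_pow]
          have : (h - u x0) / h * (h / (h - u x0)) = 1 := by field_simp
          rw [this]; simp
        linear_combination (((h - u x0) / h) ^ 6 * C1 ^ (N - 1)) * this
      have h4 : ((h - u x0) / h) ^ 6 ≤ 2 ^ 6 := pow_le_pow_left₀ (by positivity) hratio 6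
      have h5 : ((h - u x0) / h) ^ 6 * C1 ^ (N - 1) ≤ 2 ^ 6 * C1 ^ (N - 1) := by gcongr
      have h6 : (0:ℝ) ≤ 2 ^ β := by positivity
      linarith
  have hexp2 : Real.exp (k / 2 * ‖x0‖ ^ 2) ≤ 2 := by
    refine le_trans (Real.exp_le_exp.2 ?_) exp_half_le
    have := hk x0 hx0
    linarith
  have hfin := hmax x hx e he
  have a1 : (h - u x) ^ β * 1 * hs u x e e ≤ (h - u x) ^ β * Real.exp (k / 2 * ‖x‖ ^ 2) * hs u x e e := by
    gcongr
  have a2 : (h - u x0) ^ β * Real.exp (k / 2 * ‖x0‖ ^ 2) * lam m ≤ (h - u x0) ^ β * 2 * lam m := by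
    gcongr
  have a3 : (h - u x) ^ β * hs u x e e ≤ 2 * ((h - u x0) ^ β * lam m) := by linarith
  rw [div_pow, div_mul_eq_mul_div] at hmain ⊢
  rw [div_le_iff₀ (by positivity)] at hmain ⊢
  linarith

lemma pog_bound (hu : ContDiff ℝ (⊤ : ℕ∞) u) (hF : ∀ x, ∃ b lam, Frame p u x b lam) (hp : 2 ≤ p)
    (hpn : p ≤ n) (hq : QuadraticGrowth u) :
    ∃ C0 : ℝ, 0 < C0 ∧ ∀ x e, ‖e‖ = 1 → hs u x e e ≤ C0 := by
  obtain ⟨C, hC, hgr⟩ := hq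
  obtain ⟨C0, β, hC0, H⟩ := pog_level hu hF hp hpn hC hgr
  refine ⟨C0, hC0, fun x e he => ?_⟩
  have h1 : Filter.Tendsto (fun h : ℝ => ((h - u x) / h) ^ β * hs u x e e) Filter.atTop
      (nhds ((1 - 0) ^ β * hs u x e e)) := by
    refine Filter.Tendsto.mul_const _ (Filter.Tendsto.pow ?_ β)
    have h2 : Filter.Tendsto (fun h : ℝ => 1 - u x / h) Filter.atTop (nhds (1 - 0)) :=
      tendsto_const_nhds.sub (tendsto_const_nhds.div_atTop Filter.tendsto_id)
    refine h2.congr' ?_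
    filter_upwards [Filter.eventually_gt_atTop 0] with h hh
    field_simp
  have h3 := le_of_tendsto h1 (b := C0) (by
    filter_upwards [Filter.eventually_ge_atTop (max C (u x))] with h hh
    exact H h (le_trans (le_max_left _ _) hh) x (le_trans (le_max_right _ _) hh) e he)
  simpa using h3

/-- uniform ellipticity -/
lemma ell_bound (hu : ContDiff ℝ (⊤ : ℕ∞) u) (hF : ∀ x, ∃ b lam, Frame p u x b lam) (hp : 2 ≤ p)
    (hpn : p ≤ n) (hq : QuadraticGrowth u) :
    ∃ C0 l L : ℝ, 0 < l ∧ l ≤ L ∧ (∀ x e, ‖e‖ = 1 → hs u x e e ≤ C0) ∧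
      ∀ x b lam, Frame p u x b lam → ∀ i, l ≤ Fc p lam i ∧ Fc p lam i ≤ L := by
  obtain ⟨C0, hC0, H⟩ := pog_bound hu hF hp hpn hq
  have hp0 : (0:ℝ) < p := by exact_mod_cast (by omega : 0 < p)
  set A : ℝ := p * C0 with hA
  have hA0 : 0 < A := by positivity
  have key : ∀ x b lam, Frame p u x b lam → ∀ i, A⁻¹ ≤ Fc p lam i ∧
      Fc p lam i ≤ (PSub n p).card * A ^ ((PSub n p).card - 1) := by
    intro x b lam hfr i
    have hl : ∀ j, lam j ≤ C0 := fun j => by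
      have := H x (b j) (by simp)
      rwa [hfr.1, if_pos rfl] at this
    have hsle : ∀ s ∈ PSub n p, ∑ j ∈ s, lam j ≤ A := fun s hs => by
      have := Finset.sum_le_sum (s := s) fun j _ => hl j
      rw [Finset.sum_const, mem_PSub.1 hs, nsmul_eq_mul] at this
      exact this
    constructor
    · obtain ⟨s, hs, hi⟩ := exists_PSub hp hpn i
      have h1 : A⁻¹ ≤ (∑ j ∈ s, lam j)⁻¹ := inv_anti₀ (hfr.2.pos hs) (hsle s hs)
      refine h1.trans ?_
      have := Finset.single_le_sum (s := PSub n p)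
        (f := fun s => if i ∈ s then (∑ j ∈ s, lam j)⁻¹ else 0) (fun t ht => ?_) hs
      · simpa [hi, Fc] using this
      · split_ifs
        · exact (inv_pos.2 (hfr.2.pos ht)).le
        · exact le_rfl
    · refine (Fc_le_Ts hfr.2 i).trans ?_
      rw [← nsmul_eq_mul, ← Finset.sum_const]
      refine Finset.sum_le_sum fun s hs => ?_
      have h1 : (∑ j ∈ s, lam j) * ∏ t ∈ (PSub n p).erase s, ∑ j ∈ t, lam j = 1 := by
        rw [Finset.mul_prod_erase _ (fun t => ∑ j ∈ t, lam j) hs]; exact hfr.2.2.2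
      rw [inv_eq_of_mul_eq_one_right h1, ← Finset.card_erase_of_mem hs, ← Finset.prod_const]
      exact Finset.prod_le_prod (fun t ht => (hfr.2.pos (Finset.mem_of_mem_erase ht)).le)
        (fun t ht => hsle t (Finset.mem_of_mem_erase ht))
  refine ⟨C0, A⁻¹, (PSub n p).card * A ^ ((PSub n p).card - 1), inv_pos.2 hA0, ?_, H, key⟩
  obtain ⟨b, lam, hfr⟩ := hF 0
  have := key 0 b lam hfr ⟨0, by omega⟩
  exact this.1.trans this.2

end pogbound

section conclusion
open scoped RealInnerProductSpace
variable {n p : ℕ} {u : EuclideanSpace ℝ (Fin n) → ℝ}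

lemma superSol_w (hu : ContDiff ℝ (⊤ : ℕ∞) u) (hF : ∀ x, ∃ b lam, Frame p u x b lam) {l L : ℝ}
    (hell : ∀ x b lam, Frame p u x b lam → ∀ i, l ≤ Fc p lam i ∧ Fc p lam i ≤ L)
    (S : ℝ) (e : EuclideanSpace ℝ (Fin n)) : SuperSol l L (fun x => S - hs u x e e) := by
  intro x
  obtain ⟨b, lam, hfr⟩ := hF x
  refine ⟨b, Fc p lam, hell x b lam hfr, ?_⟩
  have h1 : ∀ i, hs (fun x => S - hs u x e e) x (b i) (b i)
      = - hs (fun y => hs u y (b i) (b i)) x e e := by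
    intro i
    rw [hs_sub (u := fun _ => S) contDiff_const (smooth_hs2 hu e e), hs_hs_comm hu]
    have : hs (fun _ : EuclideanSpace ℝ (Fin n) => S) x (b i) (b i) = 0 := by simp [hs]
    rw [this, zero_sub]
  simp_rw [h1, mul_neg, Finset.sum_neg_distrib]
  rw [neg_nonpos]
  refine (second_test (f := fun t : ℝ => ∑ i, Fc p lam i * hs u (x + t • e) (b i) (b i))
    (f' := fun t : ℝ => ∑ i, Fc p lam i * D1 (fun y => hs u y (b i) (b i)) e (x + t • e)) ?_ ?_ ?_).2
  · refine Filter.Eventually.of_forall fun t => ?_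
    exact HasDerivAt.fun_sum fun i _ => (line_deriv (smooth_hs2 hu (b i) (b i)) x e t).const_mul _
  · have := HasDerivAt.fun_sum (u := Finset.univ) fun i _ =>
      (line_deriv2 (smooth_hs2 hu (b i) (b i)) x e 0).const_mul (Fc p lam i)
    simpa using this
  · refine Filter.Eventually.of_forall fun t => ?_
    obtain ⟨b', mu, h'⟩ := hF (x + t • e)
    have h2 := support hfr.2 h' b
    have h3 := Fc_lam hfr.2
    simp only [zero_smul, add_zero]
    have h4 : ∑ i, Fc p lam i * hs u x (b i) (b i) = ∑ i, Fc p lam i * lam i := by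
      refine Finset.sum_congr rfl fun i _ => ?_
      rw [hfr.1, if_pos rfl]
    rw [h4, h3]; exact h2

lemma exists_basis {e : EuclideanSpace ℝ (Fin n)} (he : ‖e‖ = 1) :
    ∃ (b : OrthonormalBasis (Fin n) ℝ (EuclideanSpace ℝ (Fin n))) (i : Fin n), b i = e := by
  have hn : 0 < n := by
    rcases Nat.eq_zero_or_pos n with h | h
    · subst h
      have : e = 0 := Subsingleton.elim _ _
      rw [this] at he; simp at he
    · exact h
  let v : Fin n → EuclideanSpace ℝ (Fin n) := fun _ => e
  have hv : Orthonormal ℝ (({⟨0, hn⟩} : Set (Fin n)).domRestrict v) := by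
    constructor
    · intro i; exact he
    · intro i j hij
      exact absurd (Subsingleton.elim i j) hij
  obtain ⟨b, hb⟩ := hv.exists_orthonormalBasis_extension_of_card_eq (by simp)
  exact ⟨b, ⟨0, hn⟩, hb _ rfl⟩

lemma hess_const (hn : 0 < n) (hu : ContDiff ℝ (⊤ : ℕ∞) u) (hF : ∀ x, ∃ b lam, Frame p u x b lam) {C0 l L : ℝ}
    (hl : 0 < l) (hlL : l ≤ L) (hC0 : ∀ x e, ‖e‖ = 1 → hs u x e e ≤ C0)
    (hell : ∀ x b lam, Frame p u x b lam → ∀ i, l ≤ Fc p lam i ∧ Fc p lam i ≤ L)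
    (e : EuclideanSpace ℝ (Fin n)) (he : ‖e‖ = 1) (x y : EuclideanSpace ℝ (Fin n)) :
    hs u x e e = hs u y e e := by
  set S : EuclideanSpace ℝ (Fin n) → ℝ := fun e => ⨆ x, hs u x e e with hS
  have hbdd : ∀ e, ‖e‖ = 1 → BddAbove (Set.range fun x => hs u x e e) := by
    intro e he
    refine ⟨C0, ?_⟩
    rintro _ ⟨x, rfl⟩
    exact hC0 x e he
  have hle : ∀ e, ‖e‖ = 1 → ∀ x, hs u x e e ≤ S e := fun e he x => le_ciSup (hbdd e he) x
  have happ : ∀ e, ∀ η > 0, ∃ x, S e - hs u x e e ≤ η := by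
    intro e η hη
    obtain ⟨x, hx⟩ := exists_lt_of_lt_ciSup (show S e - η < ⨆ x, hs u x e e by simp only [hS]; linarith)
    exact ⟨x, by linarith⟩
  have hjoint : ∀ (b : OrthonormalBasis (Fin n) ℝ (EuclideanSpace ℝ (Fin n))) (δ : ℝ), 0 < δ →
      ∃ x, ∀ i, S (b i) - hs u x (b i) (b i) ≤ δ := by
    intro b δ hδ
    refine joint hn hl hlL (fun i x => S (b i) - hs u x (b i) (b i))
      (fun i => contDiff_const.sub (smooth_hs2 hu _ _)) (fun i x => ?_)
      (fun i => superSol_w hu hF hell _ _) (fun i η hη => happ _ η hη) δ hδ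
    have := hle (b i) (by simp) x
    linarith
  -- sum of the sups does not depend on the basis
  have hle2 : ∀ b b' : OrthonormalBasis (Fin n) ℝ (EuclideanSpace ℝ (Fin n)),
      ∑ i, S (b i) ≤ ∑ i, S (b' i) := by
    intro b b'
    refine le_of_forall_pos_le_add fun ε hε => ?_
    have hn' : (0:ℝ) < n := by exact_mod_cast hn
    obtain ⟨x, hx⟩ := hjoint b (ε / n) (by positivity)
    have h1 := Finset.sum_le_sum (s := Finset.univ) fun i _ => hx i
    rw [Finset.sum_sub_distrib, trace_hs u x b b'] at h1
    have h2 := Finset.sum_le_sum (s := Finset.univ) fun i (_ : i ∈ Finset.univ) => hle (b' i) (by simp) x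
    have h3 : ∑ _i : Fin n, ε / n = ε := by simp; field_simp
    linarith
  have hmain : ∀ (b : OrthonormalBasis (Fin n) ℝ (EuclideanSpace ℝ (Fin n))) (x0 : EuclideanSpace ℝ (Fin n)),
      ∑ i, S (b i) ≤ ∑ i, hs u x0 (b i) (b i) := by
    intro b x0
    refine le_of_forall_pos_le_add fun ε hε => ?_
    have hn' : (0:ℝ) < n := by exact_mod_cast hn
    have hL0 : 0 < L := by linarith
    set δ := ε * l / (L * n * n) with hδ
    have hδ0 : 0 < δ := by positivity
    obtain ⟨x1, hx1⟩ := hjoint b δ hδ0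
    obtain ⟨b', lam, hfr⟩ := hF x1
    obtain ⟨b2, mu, hfr2⟩ := hF x0
    have e1 : ∑ i, (S (b' i) - hs u x1 (b' i) (b' i)) ≤ n * δ := by
      rw [Finset.sum_sub_distrib, trace_hs u x1 b' b]
      have h1 := Finset.sum_le_sum (s := Finset.univ) fun i _ => hx1 i
      rw [Finset.sum_sub_distrib] at h1
      simp only [Finset.sum_const, Finset.card_univ, Fintype.card_fin, nsmul_eq_mul] at h1
      linarith [hle2 b' b]
    have e2 : ∀ i, S (b' i) - lam i ≤ n * δ := by
      intro i
      refine le_trans ?_ e1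
      have := Finset.single_le_sum (s := Finset.univ) (f := fun i => S (b' i) - hs u x1 (b' i) (b' i))
        (fun i _ => by have := hle (b' i) (by simp) x1; linarith) (Finset.mem_univ i)
      simpa [hfr.1] using this
    have e3 := support hfr.2 hfr2 b'
    rw [← Fc_lam hfr.2] at e3
    have e4 : ∑ i, l * (S (b' i) - hs u x0 (b' i) (b' i)) ≤
        ∑ i, Fc p lam i * (S (b' i) - hs u x0 (b' i) (b' i)) := by
      refine Finset.sum_le_sum fun i _ => ?_
      have := hle (b' i) (by simp) x0
      exact mul_le_mul_of_nonneg_right (hell x1 b' lam hfr i).1 (by linarith)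
    have e5 : ∑ i, Fc p lam i * (S (b' i) - lam i) ≤ ∑ _i : Fin n, L * (n * δ) := by
      refine Finset.sum_le_sum fun i _ => ?_
      have h0 := Fc_nonneg hfr.2 i
      have h1 := (hell x1 b' lam hfr i).2
      calc Fc p lam i * (S (b' i) - lam i) ≤ Fc p lam i * (n * δ) := mul_le_mul_of_nonneg_left (e2 i) h0
        _ ≤ L * (n * δ) := by gcongr
    have e6 : ∑ i, Fc p lam i * (S (b' i) - hs u x0 (b' i) (b' i)) ≤ ∑ i, Fc p lam i * (S (b' i) - lam i) := by
      simp only [mul_sub, Finset.sum_sub_distrib]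
      linarith
    rw [← Finset.mul_sum, Finset.sum_sub_distrib, trace_hs u x0 b' b] at e4
    have e7 : ∑ _i : Fin n, L * (n * δ) = l * ε := by
      simp only [Finset.sum_const, Finset.card_univ, Fintype.card_fin, nsmul_eq_mul]
      rw [hδ]; field_simp
    have e8 : l * (∑ i, S (b' i) - ∑ i, hs u x0 (b i) (b i)) ≤ l * ε := by linarith
    have e9 := le_of_mul_le_mul_left e8 hl
    linarith [hle2 b b']
  have hfin : ∀ x, hs u x e e = S e := by
    intro x
    obtain ⟨b, i, hb⟩ := exists_basis he
    have h1 : ∑ i, (S (b i) - hs u x (b i) (b i)) ≤ 0 := by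
      rw [Finset.sum_sub_distrib]; linarith [hmain b x]
    have h2 := Finset.single_le_sum (s := Finset.univ) (f := fun i => S (b i) - hs u x (b i) (b i))
        (fun i _ => by have := hle (b i) (by simp) x; linarith) (Finset.mem_univ i)
    have h3 := hle e he x
    simp only [hb] at h2
    linarith
  rw [hfin x, hfin y]

lemma quad_of_const (hu : ContDiff ℝ (⊤ : ℕ∞) u)
    (H : ∀ e, ‖e‖ = 1 → ∀ x y, hs u x e e = hs u y e e) : IsQuadraticPolynomial u := by
  have H2 : ∀ e x, hs u x e e = hs u 0 e e := by
    intro e x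
    by_cases he : e = 0
    · simp [he]
    · have hpos : 0 < ‖e‖ := norm_pos_iff.2 he
      have h1 := H (‖e‖⁻¹ • e) (by rw [norm_smul]; simp [hpos.ne']) x 0
      simp only [map_smul, _root_.smul_apply, smul_eq_mul] at h1
      have : ‖e‖⁻¹ ≠ 0 := (inv_pos.2 hpos).ne'
      exact mul_left_cancel₀ this (mul_left_cancel₀ this h1)
  refine ⟨fun i j => hs u 0 (EuclideanSpace.single i 1) (EuclideanSpace.single j 1),
    fun i => D1 u (EuclideanSpace.single i 1) 0, u 0, ?_, ?_⟩
  · ext i j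
    exact hs_symm hu _ _ _
  · intro x
    have hx : x = ∑ i, x i • EuclideanSpace.single i (1:ℝ) := by
      have := (EuclideanSpace.basisFun (Fin n) ℝ).sum_repr x
      simpa using this.symm
    have hB : ∑ i, ∑ j, hs u 0 (EuclideanSpace.single i 1) (EuclideanSpace.single j 1) * x i * x j
        = hs u 0 x x := by
      conv_rhs => rw [hx]
      simp only [map_sum, map_smul, _root_.sum_apply, _root_.smul_apply, smul_eq_mul, Finset.mul_sum]
      rw [Finset.sum_comm]
      refine Finset.sum_congr rfl fun i _ => Finset.sum_congr rfl fun j _ => ?_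
      ring
    have hD : ∑ i, D1 u (EuclideanSpace.single i 1) 0 * x i = D1 u x 0 := by
      unfold D1
      conv_rhs => rw [hx]
      simp only [map_sum, map_smul, smul_eq_mul]
      exact Finset.sum_congr rfl fun i _ => mul_comm _ _
    rw [hB, hD]
    have h2 : ∀ t : ℝ, D1 u x (0 + t • x) = D1 u x 0 + t * hs u 0 x x := by
      have hd : ∀ t : ℝ, HasDerivAt (fun t : ℝ => D1 u x (0 + t • x) - t * hs u 0 x x) 0 t := by
        intro t
        have h3 := (line_deriv2 hu 0 x t).sub ((hasDerivAt_id t).mul_const (hs u 0 x x))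
        refine HasDerivAt.congr_deriv h3 ?_
        rw [H2]; ring
      intro t
      have := is_const_of_deriv_eq_zero (fun t => (hd t).differentiableAt) (fun t => (hd t).deriv) t 0
      simp only [zero_smul, zero_mul, add_zero, sub_zero] at this
      linarith
    have hd : ∀ t : ℝ, HasDerivAt (fun t : ℝ => u (0 + t • x) - (t * D1 u x 0 + t ^ 2 / 2 * hs u 0 x x)) 0 t := by
      intro t
      have h3 := (line_deriv hu 0 x t).sub (((hasDerivAt_id t).mul_const (D1 u x 0)).add
        ((((hasDerivAt_id t).pow 2).div_const 2).mul_const (hs u 0 x x)))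
      refine HasDerivAt.congr_deriv h3 ?_
      rw [h2]; simp
    have := is_const_of_deriv_eq_zero (fun t => (hd t).differentiableAt) (fun t => (hd t).deriv) 1 0
    simp at this
    linarith

end conclusion

/-- **Liouville theorem for the `p`-Monge–Ampère equation.** A smooth entire
`p`-plurisubharmonic solution of `M_p(D²u) = 1` with quadratic growth that is moreover
`(p−1)`-plurisubharmonic is a quadratic polynomial. -/
theorem liouville_p_MA (n p : ℕ) (hn : 2 ≤ n) (hp : 2 ≤ p) (hpn : p ≤ n)
    (u : EuclideanSpace ℝ (Fin n) → ℝ) (hu : ContDiff ℝ (⊤ : ℕ∞) u)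
    (hadm : ∀ x, hessEigen u x ∈ GammaHat n p)
    (heq : ∀ x, pMA n p (hessEigen u x) = 1)
    (hquad : QuadraticGrowth u)
    (hconv : ∀ x, hessEigen u x ∈ GammaHat n (p - 1)) :
    IsQuadraticPolynomial u := by
  have hF : ∀ x, ∃ b lam, Frame p u x b lam :=
    fun x => exists_frame hu x (hadm x) (heq x) (hconv x)
  obtain ⟨C0, l, L, hl, hlL, hC0, hell⟩ := ell_bound hu hF hp hpn hquad
  exact quad_of_const hu fun e he x y => hess_const (by omega) hu hF hl hlL hC0 hell e he x y
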